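/- Darboux theorem for homogeneous presymplectic forms (even case): let ∇(x) = (w₁x₁,…,wₙxₙ) on ℝⁿ, let U ⊆ ℝⁿ be open, and let ω be a smooth closed 2-form on U, homogeneous of weight w ∈ ℝ with respect to ∇, whose rank is constant equal to 2r (i.e., for every x ∈ U the linear map v ↦ ω_x(v,·) has rank 2r). Let x₀ ∈ U be such that either ∇(x₀) = 0, or ∇(x₀) ≠ 0 and ω_{x₀}(∇(x₀),·) ≠ 0 (i.e., ∇(x₀) ∉ ker ω_{x₀}). Then there exist an open neighbourhood V ⊆ U of x₀ and smooth functions q¹,…,qʳ, p₁,…,pᵣ, z¹,…,z^{n−2r} on V whose differentials are linearly independent at every point of V, each homogeneous of some weight with respect to ∇, such that ω_x(u, v) = Σᵢ (Dpᵢ(x)(u)·Dqⁱ(x)(v) − Dpᵢ(x)(v)·Dqⁱ(x)(u)) for all x ∈ V and u, v ∈ ℝⁿ; that is, ω = Σᵢ dpᵢ ∧ dqⁱ in a system of homogeneous coordinates (qⁱ, pᵢ, zᵃ). -/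

import Mathlib

/-!
Suppose first that the weight field `∇` vanishes at `x₀`. A coordinate function, restricted to a
slice transverse to `ker ω`, extends to a homogeneous first integral `q` of `ker ω`. There is then a
homogeneous `p` conjugate to `q`, meaning that `dp(v) = s` whenever `ω(v, ·) = s dq`. Both come from
integrating along the characteristic distribution. The form `ω - dp ∧ dq` is again closed and
homogeneous, of rank two less, and one inducts.

If instead `β = ω(∇, ·)` does not vanish at `x₀`, then `dβ = w ω` by Cartan's formula, and there is
a function `T` conjugate to `β`, so `dT(∇) = 1`. The reduced form `e^{-wT} (ω - dT ∧ β)` is closed,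
of rank two less and annihilated by `∇`; its (ungraded) Darboux coordinates `Pᵢ, Qᵢ` therefore have
weight zero. For `w = 0` one has `β = dH`, and `dT ∧ dH = d(e^T) ∧ d(e^{-T} H)`. For `w ≠ 0` the
form `w⁻¹ e^{-wT} β - ∑ Pᵢ dQᵢ` is closed, hence equal to `dS`, and
`ω = d(e^{wT}) ∧ dS + ∑ d(e^{wT} Pᵢ) ∧ dQᵢ`.

The distributions are integrated by lifting segments to curves tangent to them. The lifts are solved
for by the inverse function theorem on the Banach space of curves, which makes them depend smoothly
on the initial point.
-/

namespace HomogeneousDarboux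

open Set Filter
open scoped Topology

section SmoothNear

open scoped ContDiff

variable {E F G : Type*} [NormedAddCommGroup E] [NormedSpace ℝ E]
  [NormedAddCommGroup F] [NormedSpace ℝ F] [NormedAddCommGroup G] [NormedSpace ℝ G]

/-- The germ of `f` at `x₀` is smooth. Unlike `ContDiffAt ℝ ∞ f x₀`, which only provides `C^k`
regularity on a neighbourhood depending on `k`, this asks for one neighbourhood for all `k`. -/
def SmoothNear (f : E → F) (x₀ : E) : Prop := ∀ᶠ x in 𝓝 x₀, ContDiffAt ℝ ∞ f x

namespace SmoothNear

variable {f g : E → F} {x₀ : E}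

lemma of_contDiff (h : ContDiff ℝ ∞ f) (x₀ : E) : SmoothNear f x₀ :=
  .of_forall fun _ => h.contDiffAt

lemma const (c : F) (x₀ : E) : SmoothNear (fun _ => c) x₀ := of_contDiff contDiff_const x₀

lemma clm (L : E →L[ℝ] F) (x₀ : E) : SmoothNear L x₀ := of_contDiff L.contDiff x₀

lemma continuousAt (hf : SmoothNear f x₀) : ContinuousAt f x₀ := hf.self_of_nhds.continuousAt

lemma eventually_differentiableAt (hf : SmoothNear f x₀) :
    ∀ᶠ x in 𝓝 x₀, DifferentiableAt ℝ f x := by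
  filter_upwards [hf] with x hx using hx.differentiableAt (by simp)

lemma comp {g : F → G} (hg : SmoothNear g (f x₀)) (hf : SmoothNear f x₀) :
    SmoothNear (fun x => g (f x)) x₀ := by
  filter_upwards [hf, hf.continuousAt.eventually hg] with x hfx hgx using hgx.comp x hfx

lemma clm_comp (L : F →L[ℝ] G) (hf : SmoothNear f x₀) : SmoothNear (fun x => L (f x)) x₀ :=
  (clm L _).comp hf

lemma add (hf : SmoothNear f x₀) (hg : SmoothNear g x₀) : SmoothNear (fun x => f x + g x) x₀ := by
  filter_upwards [hf, hg] with x hfx hgx using hfx.add hgx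

lemma sub (hf : SmoothNear f x₀) (hg : SmoothNear g x₀) : SmoothNear (fun x => f x - g x) x₀ := by
  filter_upwards [hf, hg] with x hfx hgx using hfx.sub hgx

lemma smul {c : E → ℝ} (hc : SmoothNear c x₀) (hf : SmoothNear f x₀) :
    SmoothNear (fun x => c x • f x) x₀ := by
  filter_upwards [hc, hf] with x hcx hfx using hcx.smul hfx

lemma exp {c : E → ℝ} (hc : SmoothNear c x₀) : SmoothNear (fun x => Real.exp (c x)) x₀ := by
  filter_upwards [hc] with x hcx using hcx.exp

lemma sum {ι : Type*} [Fintype ι] {f : ι → E → F} (hf : ∀ i, SmoothNear (f i) x₀) :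
    SmoothNear (fun x => ∑ i, f i x) x₀ := by
  filter_upwards [eventually_all.2 hf] with x hfx using ContDiffAt.sum fun i _ => hfx i

lemma prodMk {g : E → G} (hf : SmoothNear f x₀) (hg : SmoothNear g x₀) :
    SmoothNear (fun x => (f x, g x)) x₀ := by
  filter_upwards [hf, hg] with x hfx hgx using hfx.prodMk hgx

lemma clm_apply {A : E → F →L[ℝ] G} (hA : SmoothNear A x₀) (hf : SmoothNear f x₀) :
    SmoothNear (fun x => A x (f x)) x₀ := by
  filter_upwards [hA, hf] with x hAx hfx using hAx.clm_apply hfx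

lemma fderiv (hf : SmoothNear f x₀) : SmoothNear (fderiv ℝ f) x₀ := by
  filter_upwards [hf] with x hfx using hfx.fderiv_right (by simp)

lemma eventually_fderiv_fderiv_comm (hf : SmoothNear f x₀) :
    ∀ᶠ x in 𝓝 x₀, ∀ u v,
      _root_.fderiv ℝ (_root_.fderiv ℝ f) x u v = _root_.fderiv ℝ (_root_.fderiv ℝ f) x v u := by
  filter_upwards [hf] with x hx u v
  have htwo : (2 : WithTop ℕ∞) ≤ ∞ := WithTop.coe_le_coe.2 le_top
  exact hx.isSymmSndFDerivAt (by simpa using htwo) u v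

lemma exists_contDiff_eventuallyEq [FiniteDimensional ℝ E] (hf : SmoothNear f x₀) :
    ∃ g : E → F, ContDiff ℝ ∞ g ∧ g =ᶠ[𝓝 x₀] f := by
  obtain ⟨δ, hδ, hball⟩ := Metric.eventually_nhds_iff_ball.1 hf
  let χ : ContDiffBump x₀ := ⟨δ / 3, δ / 2, by positivity, by linarith⟩
  refine ⟨fun x => χ x • f x, contDiff_iff_contDiffAt.2 fun x => ?_, ?_⟩
  · by_cases hx : x ∈ Metric.ball x₀ δ
    · exact χ.contDiffAt.smul (hball x hx)
    have hx' : x ∉ tsupport χ := by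
      rw [χ.tsupport_eq]
      exact fun h => hx (Metric.closedBall_subset_ball (half_lt_self hδ) h)
    have hzero : (fun x => χ x • f x) =ᶠ[𝓝 x] fun _ => 0 := by
      filter_upwards [(isClosed_tsupport χ).isOpen_compl.mem_nhds hx'] with y hy
      rw [image_eq_zero_of_notMem_tsupport hy, zero_smul]
    exact contDiffAt_const.congr_of_eventuallyEq hzero
  · filter_upwards [χ.eventuallyEq_one] with x hx
    simp [hx]

end SmoothNear

lemma isInvertible_of_isUnit {A : E →L[ℝ] E} (hA : IsUnit A) : A.IsInvertible := by
  obtain ⟨u, rfl⟩ := hA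
  exact ⟨ContinuousLinearEquiv.unitsEquiv ℝ E u, rfl⟩

lemma exists_smoothNear_rightInverse [CompleteSpace E] {Θ : E → E} (hΘ : ContDiff ℝ ∞ Θ) {a : E}
    (ha : IsUnit (fderiv ℝ Θ a)) :
    ∃ σ : E → E, SmoothNear σ (Θ a) ∧ σ (Θ a) = a ∧
      ∀ᶠ y in 𝓝 (Θ a), Θ (σ y) = y ∧ Function.Injective (fderiv ℝ Θ (σ y)) := by
  have hderiv (x : E) : HasFDerivAt Θ (fderiv ℝ Θ x) x :=
    (hΘ.differentiable (by simp) x).hasFDerivAt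
  obtain ⟨A, hA⟩ := isInvertible_of_isUnit ha
  let e := hΘ.contDiffAt.toOpenPartialHomeomorph Θ (hA ▸ hderiv a) (by simp)
  have hsource : a ∈ e.source := ContDiffAt.mem_toOpenPartialHomeomorph_source _ _ _
  have htarget : Θ a ∈ e.target := e.map_source hsource
  have hsymm : e.symm (Θ a) = a := e.left_inv hsource
  have hinvertible : ∀ᶠ y in 𝓝 (Θ a), IsUnit (fderiv ℝ Θ (e.symm y)) := by
    have hcont : ContinuousAt (fun y => fderiv ℝ Θ (e.symm y)) (Θ a) :=
      (hΘ.continuous_fderiv (by simp)).continuousAt.comp (e.continuousAt_symm htarget)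
    exact hcont.eventually (Units.isOpen.mem_nhds (by simpa only [hsymm, mem_ofPred_eq] using ha))
  refine ⟨e.symm, ?_, hsymm, ?_⟩
  · filter_upwards [e.open_target.mem_nhds htarget, hinvertible] with y hy hunit
    obtain ⟨B, hB⟩ := isInvertible_of_isUnit hunit
    exact e.contDiffAt_symm hy (hB ▸ hderiv _) hΘ.contDiffAt
  · filter_upwards [e.open_target.mem_nhds htarget, hinvertible] with y hy hunit
    exact ⟨e.right_inv hy, (isInvertible_of_isUnit hunit).injective⟩

end SmoothNear

section Curves

open scoped ContDiff

universe u

variable {E F : Type u} [NormedAddCommGroup E] [NormedSpace ℝ E]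
  [NormedAddCommGroup F] [NormedSpace ℝ F]

/-- The space of continuous curves `[0, 1] → X`, a Banach space when `X` is one. -/
abbrev Curve (X : Type*) [TopologicalSpace X] := C(unitInterval, X)

/-- The inclusion of points as constant curves. -/
noncomputable abbrev constCurve : E →L[ℝ] Curve E := .const ℝ unitInterval

/-- Pointwise application of a curve of operators to a curve of vectors, as a bounded bilinear
map. -/
noncomputable def curveApply :
    Curve (E →L[ℝ] F) →L[ℝ] Curve E →L[ℝ] Curve F :=
  LinearMap.mkContinuous₂
    (LinearMap.mk₂ ℝ (fun (A : Curve (E →L[ℝ] F)) (γ : Curve E) =>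
      (⟨fun t => A t (γ t), A.continuous.clm_apply γ.continuous⟩ : Curve F))
      (by intros; ext; simp) (by intros; ext; simp) (by intros; ext; simp)
      (by intros; ext; simp))
    1 fun A γ => by
      rw [one_mul]
      refine (ContinuousMap.norm_le _ (by positivity)).2 fun t => ((A t).le_opNorm _).trans ?_
      gcongr
      exacts [A.norm_coe_le_norm t, γ.norm_coe_le_norm t]

@[simp]
lemma curveApply_apply (A : Curve (E →L[ℝ] F)) (γ : Curve E)
    (t : unitInterval) : curveApply A γ t = A t (γ t) := rfl

lemma hasFDerivAt_curveApply (A : Curve (E →L[ℝ] F)) :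
    HasFDerivAt (fun A : Curve (E →L[ℝ] F) => curveApply A) curveApply A :=
  ContinuousLinearMap.hasFDerivAt (𝕜 := ℝ) (E := Curve (E →L[ℝ] F))
    (F := Curve E →L[ℝ] Curve F) curveApply

lemma contDiff_curveApply {n : WithTop ℕ∞} :
    ContDiff ℝ n fun A : Curve (E →L[ℝ] F) => curveApply A :=
  ContinuousLinearMap.contDiff (𝕜 := ℝ) (E := Curve (E →L[ℝ] F))
    (F := Curve E →L[ℝ] Curve F) curveApply

lemma norm_image_add_sub_image_sub_le {f : E → F} {f' : E → E →L[ℝ] F}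
    (hf : ∀ x, HasFDerivAt f (f' x) x) {x v : E} {δ ε : ℝ} (hv : ‖v‖ < δ)
    (hf' : ∀ y, ‖y - x‖ < δ → ‖f' y - f' x‖ ≤ ε) :
    ‖f (x + v) - f x - f' x v‖ ≤ ε * ‖v‖ := by
  have hball : Convex ℝ (Metric.ball x δ) := convex_ball x δ
  have := hball.norm_image_sub_le_of_norm_hasFDerivWithin_le' (𝕜 := ℝ) (x := x) (y := x + v)
    (φ := f' x) (fun y _ => (hf y).hasFDerivWithinAt)
    (fun y hy => hf' y (by simpa [dist_eq_norm] using hy))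
    (Metric.mem_ball_self ((norm_nonneg v).trans_lt hv)) (by simpa [dist_eq_norm] using hv)
  rwa [add_sub_cancel_left] at this

lemma hasFDerivAt_postcomp {f : C(E, F)} {f' : C(E, E →L[ℝ] F)} (hf : ∀ x, HasFDerivAt f (f' x) x)
    (γ : Curve E) : HasFDerivAt (f.comp ·) (curveApply (f'.comp γ)) γ := by
  rw [hasFDerivAt_iff_isLittleO_nhds_zero, Asymptotics.isLittleO_iff]
  intro ε hε
  have hcont : Continuous fun γ : Curve E => f'.comp γ :=
    ContinuousMap.continuous_postcomp f'
  obtain ⟨δ, hδ, hclose⟩ :=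
    (Metric.continuous_iff (β := Curve (E →L[ℝ] F))).1 hcont γ ε hε
  filter_upwards [Metric.ball_mem_nhds (0 : Curve E) hδ] with η hη
  rw [ContinuousMap.norm_le _ (by positivity)]
  intro t
  have hηt : ‖η t‖ < δ := (η.norm_coe_le_norm t).trans_lt (by simpa using hη)
  refine (norm_image_add_sub_image_sub_le hf hηt fun y hy => ?_).trans
    (by gcongr; exact η.norm_coe_le_norm t)
  have hshift : dist (γ + .const _ (y - γ t)) γ < δ := by
    rw [dist_eq_norm, add_sub_cancel_left]
    exact ((ContinuousMap.norm_le _ (norm_nonneg _)).2 fun _ => le_rfl).trans_lt hy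
  simpa [dist_eq_norm] using (ContinuousMap.dist_apply_le_dist t).trans (hclose _ hshift).le

lemma contDiff_postcomp_nat (n : ℕ) {F : Type u} [NormedAddCommGroup F] [NormedSpace ℝ F]
    {f : C(E, F)} (hf : ContDiff ℝ ∞ f) :
    ContDiff ℝ n fun γ : Curve E => f.comp γ := by
  induction n generalizing F with
  | zero => exact contDiff_zero.2 (ContinuousMap.continuous_postcomp f)
  | succ n ih =>
    let f' : C(E, E →L[ℝ] F) := ⟨fderiv ℝ f, hf.continuous_fderiv (by simp)⟩
    have hf' : ContDiff ℝ ∞ f' := hf.fderiv_right (by simp)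
    push_cast
    refine contDiff_succ_iff_hasFDerivAt.2 ⟨fun γ => curveApply (f'.comp γ),
      contDiff_curveApply.comp (ih hf'), fun γ => hasFDerivAt_postcomp ?_ γ⟩
    exact fun x => (hf.differentiable (by simp) x).hasFDerivAt

lemma contDiff_postcomp {f : C(E, F)} (hf : ContDiff ℝ ∞ f) :
    ContDiff ℝ ∞ fun γ : Curve E => f.comp γ :=
  contDiff_infty.2 fun n => contDiff_postcomp_nat n hf

/-- The primitive vanishing at `0` of a curve, as a bounded operator on curves. -/
noncomputable def primitive :
    Curve E →L[ℝ] Curve E :=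
  LinearMap.mkContinuous
    { toFun := fun γ => ⟨fun t => ∫ s in (0 : ℝ)..t, γ.IccExtend zero_le_one s,
        (intervalIntegral.continuous_primitive
          (fun a b => (γ.IccExtend _).continuous.intervalIntegrable a b) 0).comp
          continuous_subtype_val⟩
      map_add' := fun γ η => by
        ext t
        exact intervalIntegral.integral_add ((γ.IccExtend _).continuous.intervalIntegrable _ _)
          ((η.IccExtend _).continuous.intervalIntegrable _ _)
      map_smul' := fun c γ => by
        ext t
        exact intervalIntegral.integral_smul c _ }
    1 fun γ => by
      refine (ContinuousMap.norm_le _ (by positivity)).2 fun t => ?_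
      refine (intervalIntegral.norm_integral_le_of_norm_le_const (C := ‖γ‖)
        fun s _ => γ.norm_coe_le_norm _).trans ?_
      rw [one_mul, sub_zero, abs_of_nonneg t.2.1]
      exact mul_le_of_le_one_right (norm_nonneg _) t.2.2

lemma primitive_apply (γ : Curve E) (t : unitInterval) :
    primitive γ t = ∫ s in (0 : ℝ)..t, γ.IccExtend zero_le_one s := rfl

@[simp]
lemma primitive_apply_zero (γ : Curve E) : primitive γ 0 = 0 := by
  simp [primitive_apply]

@[simp]
lemma IccExtend_coe {X : Type*} [TopologicalSpace X] (γ : Curve X) (t : unitInterval) :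
    γ.IccExtend zero_le_one (t : ℝ) = γ t := IccExtend_val _ _ t

lemma hasDerivWithinAt_primitive [CompleteSpace E] (γ : Curve E) (t : unitInterval) :
    HasDerivWithinAt ((primitive γ).IccExtend zero_le_one) (γ t) (Icc 0 1) t := by
  have hcont : Continuous (γ.IccExtend zero_le_one) := (γ.IccExtend _).continuous
  have hderiv : HasDerivAt (fun a => ∫ s in (0 : ℝ)..a, γ.IccExtend zero_le_one s) (γ t) t := by
    rw [← IccExtend_coe γ t]
    exact hcont.integral_hasStrictDerivAt 0 t |>.hasDerivAt
  exact hderiv.hasDerivWithinAt.congr (fun s hs => IccExtend_coe _ ⟨s, hs⟩) (IccExtend_coe _ t)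

lemma primitive_eq_sub [CompleteSpace E] {φ : ℝ → E} {γ : Curve E}
    (hφ : ∀ t : unitInterval, HasDerivWithinAt φ (γ t) (Icc 0 1) t) (t : unitInterval) :
    primitive γ t = φ t - φ 0 := by
  refine intervalIntegral.integral_eq_sub_of_hasDeriv_right_of_le t.2.1 (fun s hs => ?_)
    (fun s hs => ?_) ((γ.IccExtend _).continuous.intervalIntegrable _ _)
  · exact (hφ ⟨s, hs.1, hs.2.trans t.2.2⟩).continuousWithinAt.mono (Icc_subset_Icc_right t.2.2)
  · have hs1 : s < 1 := hs.2.trans_le t.2.2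
    have := (hφ ⟨s, hs.1.le, hs1.le⟩).hasDerivAt (Icc_mem_nhds hs.1 hs1)
    rw [← IccExtend_coe γ] at this
    exact this.hasDerivWithinAt

end Curves

section Transport

open scoped ContDiff

variable {E : Type*} [NormedAddCommGroup E] [NormedSpace ℝ E]

/-- `Γ x` is the curve starting at `x` with velocity `-Ξ (Q (x - x₀))`, and `Γ` depends smoothly
on `x` near `x₀`. The last field says that the derivative of `Γ` is determined by the linearised
equation. -/
structure IsTransport (Q : E →L[ℝ] E) (Ξ : E → E →L[ℝ] E) (x₀ : E)
    (Γ : E → Curve E) : Prop where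
  smooth : SmoothNear Γ x₀
  base : Γ x₀ = constCurve x₀
  apply_zero : ∀ᶠ x in 𝓝 x₀, Γ x 0 = x
  hasDerivWithinAt : ∀ᶠ x in 𝓝 x₀, ∀ t : unitInterval,
    HasDerivWithinAt ((Γ x).IccExtend zero_le_one) (-Ξ (Γ x t) (Q (x - x₀))) (Icc 0 1) t
  fderiv_eq : ∀ᶠ x in 𝓝 x₀, ∀ (u : E) (φ : ℝ → E), φ 0 = u →
    (∀ t : unitInterval, HasDerivWithinAt φ
      (-(Ξ (Γ x t) (Q u) + fderiv ℝ Ξ (Γ x t) (φ t) (Q (x - x₀)))) (Icc 0 1) t) →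
    ∀ t : unitInterval, fderiv ℝ Γ x u t = φ t

/-- The integral equation of transport: `transportMap Q Ξ x₀ γ` is the constant curve `x` exactly
when `γ` starts at `x` and has velocity `-Ξ (Q (x - x₀))`. -/
noncomputable def transportMap (Q : E →L[ℝ] E) (Ξ : C(E, E →L[ℝ] E)) (x₀ : E) (γ : Curve E) :
    Curve E :=
  γ + primitive (curveApply (Ξ.comp γ) (constCurve (Q (γ 0 - x₀))))

/-- The derivative of `transportMap Q Ξ x₀` at `γ`, minus the identity, when `Ξ'` is the derivative
of `Ξ`. -/
noncomputable def transportVariation (Q : E →L[ℝ] E) (Ξ : C(E, E →L[ℝ] E))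
    (Ξ' : C(E, E →L[ℝ] E →L[ℝ] E)) (x₀ : E) (γ : Curve E) : Curve E →L[ℝ] Curve E :=
  primitive ∘L
    ((curveApply (Ξ.comp γ) : Curve E →L[ℝ] Curve E) ∘L (constCurve : E →L[ℝ] Curve E) ∘L Q ∘L
        (ContinuousMap.evalCLM ℝ 0 : Curve E →L[ℝ] E) +
      ((curveApply : Curve (E →L[ℝ] E) →L[ℝ] Curve E →L[ℝ] Curve E) ∘L
        (curveApply (Ξ'.comp γ) : Curve E →L[ℝ] Curve (E →L[ℝ] E))).flip
          (constCurve (Q (γ 0 - x₀))))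

lemma transportVariation_apply (Q : E →L[ℝ] E) (Ξ : C(E, E →L[ℝ] E))
    (Ξ' : C(E, E →L[ℝ] E →L[ℝ] E)) (x₀ : E) (γ η : Curve E) :
    transportVariation Q Ξ Ξ' x₀ γ η =
      primitive (curveApply (Ξ.comp γ) (constCurve (Q (η 0))) +
        curveApply (curveApply (Ξ'.comp γ) η) (constCurve (Q (γ 0 - x₀)))) := rfl

lemma hasFDerivAt_transportMap (Q : E →L[ℝ] E) {Ξ : C(E, E →L[ℝ] E)}
    {Ξ' : C(E, E →L[ℝ] E →L[ℝ] E)} (hΞ : ∀ x, HasFDerivAt Ξ (Ξ' x) x) (x₀ : E) (γ : Curve E) :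
    HasFDerivAt (transportMap Q Ξ x₀) (1 + transportVariation Q Ξ Ξ' x₀ γ) γ := by
  let eval₀ : Curve E →L[ℝ] E := ContinuousMap.evalCLM ℝ 0
  have hoperator : HasFDerivAt
      (fun γ : Curve E => (curveApply (Ξ.comp γ) : Curve E →L[ℝ] Curve E)) _ γ :=
    HasFDerivAt.comp (F := Curve (E →L[ℝ] E)) (G := Curve E →L[ℝ] Curve E)
      (g := fun A => curveApply A) γ (hasFDerivAt_curveApply (Ξ.comp γ)) (hasFDerivAt_postcomp hΞ γ)
  have hdirection : HasFDerivAt (fun γ : Curve E => constCurve (Q (eval₀ γ - x₀)))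
      ((constCurve : E →L[ℝ] Curve E) ∘L Q ∘L eval₀) γ :=
    (constCurve : E →L[ℝ] Curve E).hasFDerivAt.comp γ
      (Q.hasFDerivAt.comp γ (eval₀.hasFDerivAt.sub_const x₀))
  exact (hasFDerivAt_id γ).add
    ((primitive : Curve E →L[ℝ] Curve E).hasFDerivAt.comp γ (hoperator.clm_apply hdirection))

lemma contDiff_transportMap (Q : E →L[ℝ] E) {Ξ : C(E, E →L[ℝ] E)} (hΞ : ContDiff ℝ ∞ Ξ) (x₀ : E) :
    ContDiff ℝ ∞ (transportMap Q Ξ x₀) := by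
  let eval₀ : Curve E →L[ℝ] E := ContinuousMap.evalCLM ℝ 0
  have hoperator : ContDiff ℝ ∞
      (fun γ : Curve E => (curveApply (Ξ.comp γ) : Curve E →L[ℝ] Curve E)) :=
    contDiff_curveApply.comp (contDiff_postcomp hΞ)
  have hdirection : ContDiff ℝ ∞ (fun γ : Curve E => constCurve (Q (eval₀ γ - x₀))) :=
    (constCurve : E →L[ℝ] Curve E).contDiff.comp
      (Q.contDiff.comp (eval₀.contDiff.sub contDiff_const))
  exact contDiff_id.add
    ((primitive : Curve E →L[ℝ] Curve E).contDiff.comp (hoperator.clm_apply hdirection))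

lemma isUnit_one_add_transportVariation_const (Q : E →L[ℝ] E) (Ξ : C(E, E →L[ℝ] E))
    (Ξ' : C(E, E →L[ℝ] E →L[ℝ] E)) (x₀ : E) :
    IsUnit (1 + transportVariation Q Ξ Ξ' x₀ (constCurve x₀)) := by
  refine IsNilpotent.isUnit_one_add ⟨2, ?_⟩
  ext1 η
  simp [pow_two, transportVariation_apply]

variable {Q : E →L[ℝ] E} {x₀ : E}

lemma apply_zero_of_transportMap_eq {Ξ : C(E, E →L[ℝ] E)} {γ : Curve E} {x : E}
    (hγ : transportMap Q Ξ x₀ γ = constCurve x) : γ 0 = x := by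
  simpa [transportMap] using congrArg (fun η : Curve E => η 0) hγ

lemma IsTransport.eventually_forall {Ξ : E → E →L[ℝ] E} {Γ : E → Curve E}
    (hΓ : IsTransport Q Ξ x₀ Γ) {P : E → Prop} (hP : ∀ᶠ x in 𝓝 x₀, P x) :
    ∀ᶠ x in 𝓝 x₀, ∀ t, P (Γ x t) := by
  obtain ⟨δ, hδ, hball⟩ := Metric.eventually_nhds_iff_ball.1 hP
  filter_upwards [hΓ.smooth.continuousAt.eventually (Metric.ball_mem_nhds _ hδ)] with x hx t
  rw [hΓ.base] at hx
  exact hball _ ((ContinuousMap.dist_apply_le_dist t).trans_lt hx)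

lemma IsTransport.congr {Ξ Ξ' : E → E →L[ℝ] E} {Γ : E → Curve E} (hΓ : IsTransport Q Ξ' x₀ Γ)
    (h : Ξ =ᶠ[𝓝 x₀] Ξ') : IsTransport Q Ξ x₀ Γ where
  smooth := hΓ.smooth
  base := hΓ.base
  apply_zero := hΓ.apply_zero
  hasDerivWithinAt := by
    filter_upwards [hΓ.hasDerivWithinAt, hΓ.eventually_forall h] with x hx hΞ t
    exact hΞ t ▸ hx t
  fderiv_eq := by
    filter_upwards [hΓ.fderiv_eq, hΓ.eventually_forall h.eventually_nhds] with x hx hΞ u φ hφ0 hφ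
    refine hx u φ hφ0 fun t => ?_
    rw [← (hΞ t).self_of_nhds, ← EventuallyEq.fderiv_eq (hΞ t)]
    exact hφ t

variable [CompleteSpace E]

lemma hasDerivWithinAt_of_transportMap_eq {Ξ : C(E, E →L[ℝ] E)} {γ : Curve E} {x : E}
    (hγ : transportMap Q Ξ x₀ γ = constCurve x) (t : unitInterval) :
    HasDerivWithinAt (γ.IccExtend zero_le_one) (-Ξ (γ t) (Q (x - x₀))) (Icc 0 1) t := by
  set velocity : Curve E := curveApply (Ξ.comp γ) (constCurve (Q (x - x₀)))
  have hγ' : γ = constCurve x - primitive velocity := by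
    rw [eq_sub_iff_add_eq, ← hγ, transportMap, apply_zero_of_transportMap_eq hγ]
  refine ((hasDerivWithinAt_primitive velocity t).const_sub x).congr_of_mem (fun r hr => ?_) t.2
  have hr' := congrArg (fun η : Curve E => η ⟨r, hr⟩) hγ'
  rw [IccExtend_coe γ ⟨r, hr⟩, IccExtend_coe (primitive velocity) ⟨r, hr⟩]
  exact hr'

lemma one_add_transportVariation_eq_constCurve {Ξ : C(E, E →L[ℝ] E)}
    {Ξ' : C(E, E →L[ℝ] E →L[ℝ] E)} {γ η : Curve E} {x u : E} {φ : ℝ → E} (hγ0 : γ 0 = x)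
    (hηφ : ∀ t, η t = φ t) (hφ0 : φ 0 = u)
    (hφ : ∀ t : unitInterval, HasDerivWithinAt φ
      (-(Ξ (γ t) (Q u) + Ξ' (γ t) (φ t) (Q (x - x₀)))) (Icc 0 1) t) :
    (1 + transportVariation Q Ξ Ξ' x₀ γ) η = constCurve u := by
  have hη0 : η 0 = u := by simpa [hφ0] using hηφ 0
  ext t
  have hprimitive := primitive_eq_sub (φ := fun t => -φ t)
    (γ := curveApply (Ξ.comp γ) (constCurve (Q u)) +
      curveApply (curveApply (Ξ'.comp γ) η) (constCurve (Q (x - x₀))))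
    (fun t => (hφ t).neg.congr_deriv (by
      simp only [neg_neg, ContinuousMap.add_apply, curveApply_apply, hηφ]; rfl)) t
  simp only [add_apply, one_apply_eq_self, ContinuousMap.add_apply,
    transportVariation_apply, hη0, hγ0, hprimitive, hηφ, hφ0]
  simp

lemma exists_isTransport_of_contDiff (Q : E →L[ℝ] E) {Ξ : E → E →L[ℝ] E} (hΞ : ContDiff ℝ ∞ Ξ)
    (x₀ : E) : ∃ Γ, IsTransport Q Ξ x₀ Γ := by
  let Ξc : C(E, E →L[ℝ] E) := ⟨Ξ, hΞ.continuous⟩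
  let Ξ' : C(E, E →L[ℝ] E →L[ℝ] E) := ⟨fderiv ℝ Ξ, hΞ.continuous_fderiv (by simp)⟩
  let const : E →L[ℝ] Curve E := constCurve
  have hderiv (γ) : HasFDerivAt (transportMap Q Ξc x₀) (1 + transportVariation Q Ξc Ξ' x₀ γ) γ :=
    hasFDerivAt_transportMap Q (fun x => (hΞ.differentiable (by simp) x).hasFDerivAt) x₀ γ
  have hbase : transportMap Q Ξc x₀ (const x₀) = const x₀ := by simp [transportMap, const]
  obtain ⟨s, hs, hs₀, hs_right⟩ := exists_smoothNear_rightInverse (a := const x₀)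
    (contDiff_transportMap Q (Ξ := Ξc) hΞ x₀)
    ((hderiv _).fderiv ▸ isUnit_one_add_transportVariation_const Q Ξc Ξ' x₀)
  rw [hbase] at hs hs₀ hs_right
  have hsmooth : SmoothNear (fun x => s (const x)) x₀ := hs.comp (.clm const x₀)
  have hright := const.continuous.continuousAt.eventually hs_right
  have hzero : ∀ᶠ x in 𝓝 x₀, s (const x) 0 = x :=
    hright.mono fun x hx => apply_zero_of_transportMap_eq hx.1
  refine ⟨fun x => s (const x), hsmooth, hs₀, hzero,
    hright.mono fun x hx => hasDerivWithinAt_of_transportMap_eq hx.1, ?_⟩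
  filter_upwards [hright, hright.eventually_nhds, hzero, hsmooth.eventually_differentiableAt]
    with x hx hx_near hx0 hdiff u φ hφ0 hφ t
  have hcontφ : ContinuousOn φ (Icc 0 1) := fun t ht => (hφ ⟨t, ht⟩).continuousWithinAt
  let η : Curve E := ⟨fun t => φ t, hcontφ.domRestrict⟩
  have hη : fderiv ℝ (transportMap Q Ξc x₀) (s (const x)) η = const u :=
    (hderiv _).fderiv ▸ one_add_transportVariation_eq_constCurve hx0 (fun _ => rfl) hφ0 hφ
  have hchain : fderiv ℝ (transportMap Q Ξc x₀) (s (const x)) ∘L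
      fderiv ℝ (fun x => s (const x)) x = const :=
    ((hderiv _).differentiableAt.hasFDerivAt.comp x hdiff.hasFDerivAt).unique
      (const.hasFDerivAt.congr_of_eventuallyEq (hx_near.mono fun y hy => hy.1))
  have hu := congrArg (fun L : E →L[ℝ] Curve E => L u) hchain
  exact congrArg (fun η : Curve E => η t) (hx.2 (hu.trans hη.symm))

end Transport

section Lift

variable {E : Type*} [NormedAddCommGroup E] [NormedSpace ℝ E] {Q : E →L[ℝ] E}
  {Ξ : E → E →L[ℝ] E} {x₀ : E} {Γ : E → Curve E}

/-- `Ξ x v` is the lift of `v` modulo `ker Q`: the ranges of the `Ξ x` form a distribution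
complementary to the kernel of the projection `Q`, presented as a graph over the range of `Q`. -/
structure IsLift (Q : E →L[ℝ] E) (Ξ : E → E →L[ℝ] E) (x₀ : E) : Prop where
  smooth : SmoothNear Ξ x₀
  proj_apply : ∀ᶠ x in 𝓝 x₀, ∀ v, Q (Ξ x v) = Q v
  apply_proj : ∀ᶠ x in 𝓝 x₀, ∀ v, Ξ x (Q v) = Ξ x v

/-- The `E`-valued or real-valued one-form `g` along the distribution of a lift `Ξ` is closed,
that is, its derivative along the distribution is symmetric. Taking `g = Ξ` expresses that the
lift is flat, so that its distribution is involutive. -/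
def IsClosedAlong {F : Type*} [NormedAddCommGroup F] [NormedSpace ℝ F] (Ξ : E → E →L[ℝ] E)
    (g : E → E →L[ℝ] F) (x₀ : E) : Prop :=
  ∀ᶠ x in 𝓝 x₀, ∀ v₁ v₂, fderiv ℝ g x (Ξ x v₁) v₂ = fderiv ℝ g x (Ξ x v₂) v₁

lemma IsLift.proj_proj (hΞ : IsLift Q Ξ x₀) (v : E) : Q (Q v) = Q v := by
  rw [← hΞ.proj_apply.self_of_nhds (Q v), hΞ.apply_proj.self_of_nhds, hΞ.proj_apply.self_of_nhds]

lemma exists_isTransport [FiniteDimensional ℝ E] (Q : E →L[ℝ] E) (hΞ : SmoothNear Ξ x₀) :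
    ∃ Γ, IsTransport Q Ξ x₀ Γ := by
  have := FiniteDimensional.complete ℝ E
  obtain ⟨Ξ', hΞ', heq⟩ := hΞ.exists_contDiff_eventuallyEq
  obtain ⟨Γ, hΓ⟩ := exists_isTransport_of_contDiff Q hΞ' x₀
  exact ⟨Γ, hΓ.congr heq.symm⟩

lemma sub_eq_of_hasDerivWithinAt_const {F : Type*} [NormedAddCommGroup F] [NormedSpace ℝ F]
    {φ : ℝ → F} {c : F} (hφ : ∀ t : unitInterval, HasDerivWithinAt φ c (Icc 0 1) t) :
    φ 1 - φ 0 = c := by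
  have hderiv (t : ℝ) (ht : t ∈ Icc (0 : ℝ) 1) :
      HasDerivWithinAt (fun s => φ s - s • c) 0 (Icc 0 1) t := by
    simpa using (hφ ⟨t, ht⟩).fun_sub ((hasDerivWithinAt_id t _).smul_const c)
  have hconst := constant_of_derivWithin_zero (fun t ht => (hderiv t ht).differentiableWithinAt)
    (fun t ht => (hderiv t (Ico_subset_Icc_self ht)).derivWithin
      (uniqueDiffOn_Icc_zero_one t (Ico_subset_Icc_self ht))) 1 (right_mem_Icc.2 zero_le_one)
  simpa [sub_eq_iff_eq_add, add_comm] using hconst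

lemma IsTransport.eventually_sub_eq {F : Type*} [NormedAddCommGroup F] [NormedSpace ℝ F]
    (hΓ : IsTransport Q Ξ x₀ Γ) {h : E → F} (hh : SmoothNear h x₀) :
    ∀ᶠ x in 𝓝 x₀, ∀ c : F, (∀ t, fderiv ℝ h (Γ x t) (Ξ (Γ x t) (Q (x - x₀))) = c) →
      h x - h (Γ x 1) = c := by
  filter_upwards [hΓ.hasDerivWithinAt, hΓ.apply_zero,
    hΓ.eventually_forall hh.eventually_differentiableAt] with x hderiv hx hdiff c hc
  have hend := sub_eq_of_hasDerivWithinAt_const (φ := fun t => -h ((Γ x).IccExtend zero_le_one t))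
    (c := c) fun t => by
      have hdiff_t := IccExtend_coe (Γ x) t ▸ hdiff t
      refine (hdiff_t.hasFDerivAt.comp_hasDerivWithinAt (t : ℝ) (hderiv t)).neg.congr_deriv ?_
      rw [IccExtend_coe, map_neg, neg_neg, hc]
  have h0 := IccExtend_coe (Γ x) 0
  have h1 := IccExtend_coe (Γ x) 1
  simp only [Icc.coe_zero, Icc.coe_one] at h0 h1
  rw [h0, h1, hx] at hend
  rw [← hend]; abel

lemma IsTransport.proj_endpoint (hΓ : IsTransport Q Ξ x₀ Γ) (hΞ : IsLift Q Ξ x₀) :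
    ∀ᶠ x in 𝓝 x₀, Q (Γ x 1 - x₀) = 0 := by
  filter_upwards [hΓ.eventually_sub_eq (.clm Q x₀), hΓ.eventually_forall hΞ.proj_apply]
    with x hx hproj
  have hend := hx (Q (x - x₀)) fun t => by rw [Q.fderiv, hproj, hΞ.proj_proj]
  rw [map_sub] at hend ⊢
  exact sub_eq_zero.2 (sub_right_injective hend)

lemma IsTransport.endpoint_eq_self (hΓ : IsTransport Q Ξ x₀ Γ) :
    ∀ᶠ x in 𝓝 x₀, Q (x - x₀) = 0 → Γ x 1 = x := by
  filter_upwards [hΓ.eventually_sub_eq (.of_contDiff contDiff_id x₀)] with x hx hslice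
  exact (sub_eq_zero.1 (hx 0 fun t => by rw [hslice, map_zero, map_zero])).symm

lemma IsTransport.fderiv_apply_lift (hΓ : IsTransport Q Ξ x₀ Γ) (hΞ : IsLift Q Ξ x₀)
    (hflat : IsClosedAlong Ξ Ξ x₀) :
    ∀ᶠ x in 𝓝 x₀, ∀ v, fderiv ℝ Γ x (Ξ x v) 1 = 0 := by
  filter_upwards [hΓ.hasDerivWithinAt, hΓ.apply_zero, hΓ.fderiv_eq, hΞ.proj_apply,
    hΓ.eventually_forall hΞ.apply_proj, hΓ.eventually_forall hflat,
    hΓ.eventually_forall hΞ.smooth.eventually_differentiableAt]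
    with x hderiv hx hfderiv hproj happly hflat hdiff v
  have h0 := IccExtend_coe (Γ x) 0
  rw [hx, Icc.coe_zero] at h0
  refine (hfderiv _ (fun t => (1 - t) • Ξ ((Γ x).IccExtend zero_le_one t) v)
    (by simp [h0]) (fun t => ?_) 1).trans (by simp)
  have hdiff_t := IccExtend_coe (Γ x) t ▸ hdiff t
  have hlift := (hdiff_t.hasFDerivAt.comp_hasDerivWithinAt (t : ℝ) (hderiv t)).clm_apply
    (hasDerivWithinAt_const (t : ℝ) (Icc 0 1) v)
  refine (((hasDerivWithinAt_id (t : ℝ) (Icc 0 1)).const_sub 1).smul hlift).congr_deriv ?_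
  simp only [Function.comp, IccExtend_coe, map_neg, map_smul, neg_apply, smul_apply, map_zero,
    add_zero, id, hproj, happly, hflat t v (Q (x - x₀))]
  module

lemma IsTransport.fderiv_apply_of_invariant (hΓ : IsTransport Q Ξ x₀ Γ) {u : E} (hu : Q u = 0)
    (hinv : ∀ᶠ x in 𝓝 x₀, fderiv ℝ Ξ x u = 0) :
    ∀ᶠ x in 𝓝 x₀, fderiv ℝ Γ x u 1 = u := by
  filter_upwards [hΓ.fderiv_eq, hΓ.eventually_forall hinv] with x hx hinv
  refine hx u (fun _ => u) rfl (fun t => ?_) 1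
  simpa [hu, hinv t] using hasDerivWithinAt_const (t : ℝ) (Icc 0 1) u

theorem IsLift.eventually_eq_zero_of_fderiv_eq_zero [FiniteDimensional ℝ E] (hΞ : IsLift Q Ξ x₀)
    {h : E → ℝ} (hh : SmoothNear h x₀) (hd : ∀ᶠ x in 𝓝 x₀, ∀ v, fderiv ℝ h x (Ξ x v) = 0)
    (hslice : ∀ᶠ x in 𝓝 x₀, Q (x - x₀) = 0 → h x = 0) : ∀ᶠ x in 𝓝 x₀, h x = 0 := by
  obtain ⟨Γ, hΓ⟩ := exists_isTransport Q hΞ.smooth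
  filter_upwards [hΓ.eventually_sub_eq hh, hΓ.eventually_forall hd, hΓ.eventually_forall hslice,
    hΓ.proj_endpoint hΞ] with x hsub hd hslice hend
  rw [sub_eq_zero.1 (hsub 0 fun t => hd t _), hslice 1 hend]

/-- The pair `(A, a)` as the operator `(v, s) ↦ (A v, a v)`. -/
noncomputable def graphOperator : (E →L[ℝ] E) × (E →L[ℝ] ℝ) →L[ℝ] E × ℝ →L[ℝ] E × ℝ :=
  ContinuousLinearMap.precomp (E × ℝ) (ContinuousLinearMap.fst ℝ E ℝ) ∘L
    ((ContinuousLinearMap.postcomp E (ContinuousLinearMap.inl ℝ E ℝ)).coprod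
      (ContinuousLinearMap.postcomp E (ContinuousLinearMap.inr ℝ E ℝ)))

@[simp]
lemma graphOperator_apply (A : (E →L[ℝ] E) × (E →L[ℝ] ℝ)) (v : E × ℝ) :
    graphOperator A v = (A.1 v.1, A.2 v.1) := by
  simp [graphOperator]

/-- The lift to `E × ℝ` whose distribution consists of the graphs of `g`: its leaves are the graphs
of the functions with differential `g` along the leaves of `Ξ`. -/
noncomputable def graphLift (Ξ : E → E →L[ℝ] E) (g : E → E →L[ℝ] ℝ) (x : E × ℝ) :
    E × ℝ →L[ℝ] E × ℝ :=
  graphOperator (Ξ x.1, g x.1)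

variable {g : E → E →L[ℝ] ℝ} {G : E × ℝ → Curve (E × ℝ)}

lemma fderiv_graphLift {x : E × ℝ} (hΞ : DifferentiableAt ℝ Ξ x.1)
    (hg : DifferentiableAt ℝ g x.1) (u v : E × ℝ) :
    fderiv ℝ (graphLift Ξ g) x u v = (fderiv ℝ Ξ x.1 u.1 v.1, fderiv ℝ g x.1 u.1 v.1) := by
  have hpair : HasFDerivAt (fun x : E × ℝ => (Ξ x.1, g x.1)) _ x :=
    (hΞ.hasFDerivAt.prodMk hg.hasFDerivAt).comp x hasFDerivAt_fst
  exact (congr($((graphOperator.hasFDerivAt.comp x hpair).fderiv) u v)).trans (by simp)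

lemma isLift_graphLift (hΞ : IsLift Q Ξ x₀) (hg : SmoothNear g x₀)
    (hgQ : ∀ᶠ x in 𝓝 x₀, ∀ v, g x (Q v) = g x v) :
    IsLift (Q.prodMap 0) (graphLift Ξ g) (x₀, 0) where
  smooth := by
    have hfst : SmoothNear (Prod.fst : E × ℝ → E) (x₀, 0) := .of_contDiff contDiff_fst _
    exact ((hΞ.smooth.comp (x₀ := (x₀, 0)) hfst).prodMk (hg.comp hfst)).clm_comp graphOperator
  proj_apply := by
    filter_upwards [continuousAt_fst.eventually hΞ.proj_apply] with x hx v
    simp [graphLift, hx, Prod.map]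
  apply_proj := by
    filter_upwards [continuousAt_fst.eventually hΞ.apply_proj, continuousAt_fst.eventually hgQ]
      with x hx hgx v
    simp [graphLift, hx, hgx]

lemma isClosedAlong_graphLift (hΞ : SmoothNear Ξ x₀) (hg : SmoothNear g x₀)
    (hflat : IsClosedAlong Ξ Ξ x₀) (hclosed : IsClosedAlong Ξ g x₀) :
    IsClosedAlong (graphLift Ξ g) (graphLift Ξ g) (x₀, 0) := by
  have hnear := hΞ.eventually_differentiableAt.and
    (hg.eventually_differentiableAt.and (hflat.and hclosed))
  filter_upwards [continuousAt_fst.eventually hnear] with x ⟨hΞx, hgx, hflat, hclosed⟩ v₁ v₂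
  simp [fderiv_graphLift hΞx hgx, graphLift, hflat v₁.1, hclosed v₁.1]

lemma IsTransport.fderiv_graphLift_inl (hΓ : IsTransport (Q.prodMap 0) (graphLift Ξ g) (x₀, 0) G)
    (hΞ : IsLift Q Ξ x₀) (hg : SmoothNear g x₀) (hgQ : ∀ᶠ x in 𝓝 x₀, ∀ v, g x (Q v) = g x v)
    (hflat : IsClosedAlong Ξ Ξ x₀) (hclosed : IsClosedAlong Ξ g x₀) :
    ∀ᶠ x in 𝓝 x₀, ∀ v, fderiv ℝ G (x, 0) (Ξ x v, 0) 1 = (0, -g x v) := by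
  have htendsto : Tendsto (fun x : E => (x, (0 : ℝ))) (𝓝 x₀) (𝓝 (x₀, 0)) :=
    (Continuous.prodMk_left (0 : ℝ)).tendsto x₀
  have hvertical := hΓ.fderiv_apply_of_invariant (u := (0, 1)) (by simp) (by
    filter_upwards [continuousAt_fst.eventually hΞ.smooth.eventually_differentiableAt,
      continuousAt_fst.eventually hg.eventually_differentiableAt] with y hΞy hgy
    refine ContinuousLinearMap.ext fun v => ?_
    simp [fderiv_graphLift hΞy hgy])
  filter_upwards [htendsto.eventually (hΓ.fderiv_apply_lift (isLift_graphLift hΞ hg hgQ)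
    (isClosedAlong_graphLift hΞ.smooth hg hflat hclosed)), htendsto.eventually hvertical]
    with x hlift hvert v
  have hsplit : (Ξ x v, (0 : ℝ)) = graphLift Ξ g (x, 0) (v, 0) - g x v • (0, 1) := by
    simp [graphLift]
  rw [hsplit, map_sub, map_smul, ContinuousMap.sub_apply, ContinuousMap.smul_apply, hlift, hvert]
  simp

theorem IsLift.exists_fderiv_apply_eq [FiniteDimensional ℝ E] (hΞ : IsLift Q Ξ x₀)
    (hg : SmoothNear g x₀) (hgQ : ∀ᶠ x in 𝓝 x₀, ∀ v, g x (Q v) = g x v)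
    (hflat : IsClosedAlong Ξ Ξ x₀) (hclosed : IsClosedAlong Ξ g x₀) {f₀ : E → ℝ}
    (hf₀ : SmoothNear f₀ x₀) :
    ∃ f : E → ℝ, SmoothNear f x₀ ∧ (∀ᶠ x in 𝓝 x₀, ∀ v, fderiv ℝ f x (Ξ x v) = g x v) ∧
      ∀ᶠ x in 𝓝 x₀, Q (x - x₀) = 0 → f x = f₀ x := by
  obtain ⟨G, hG⟩ := exists_isTransport (Q.prodMap 0) (isLift_graphLift hΞ hg hgQ).smooth
  let embed : E →L[ℝ] E × ℝ := .inl ℝ E ℝ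
  let eval₁ : Curve (E × ℝ) →L[ℝ] E × ℝ := ContinuousMap.evalCLM ℝ 1
  let endpoint : E → E × ℝ := fun x => eval₁ (G (embed x))
  have htendsto : Tendsto embed (𝓝 x₀) (𝓝 (x₀, 0)) := embed.continuous.tendsto x₀
  have hslice : ∀ᶠ x in 𝓝 x₀, Q (x - x₀) = 0 → endpoint x = (x, 0) := by
    filter_upwards [htendsto.eventually hG.endpoint_eq_self] with x hx hQx
    exact hx (by simpa [embed] using hQx)
  have hendpoint₀ : endpoint x₀ = (x₀, 0) := hslice.self_of_nhds (by simp)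
  have hendpoint : SmoothNear endpoint x₀ :=
    (SmoothNear.comp (f := embed) (g := G) hG.smooth (.clm embed x₀)).clm_comp eval₁
  have hfst : SmoothNear (fun x => (endpoint x).1) x₀ :=
    hendpoint.clm_comp (ContinuousLinearMap.fst ℝ E ℝ)
  have hf₀' : SmoothNear f₀ (endpoint x₀).1 := by rwa [hendpoint₀]
  refine ⟨fun x => f₀ (endpoint x).1 - (endpoint x).2, ?_, ?_, ?_⟩
  · exact (SmoothNear.comp (f := fun x => (endpoint x).1) hf₀' hfst).sub
      (hendpoint.clm_comp (ContinuousLinearMap.snd ℝ E ℝ))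
  · filter_upwards [hG.fderiv_graphLift_inl hΞ hg hgQ hflat hclosed,
      htendsto.eventually hG.smooth.eventually_differentiableAt,
      hfst.continuousAt.eventually hf₀'.eventually_differentiableAt] with x hx hdiff hdiff₀ v
    have hpath : HasFDerivAt endpoint (eval₁ ∘L fderiv ℝ G (embed x) ∘L embed) x :=
      eval₁.hasFDerivAt.comp x (hdiff.hasFDerivAt.comp x embed.hasFDerivAt)
    have hderiv := (hdiff₀.hasFDerivAt.comp x hpath.fst).sub hpath.snd
    refine (congr($(hderiv.fderiv) (Ξ x v))).trans ?_
    have hv : eval₁ (fderiv ℝ G (embed x) (embed (Ξ x v))) = (0, -g x v) := hx v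
    simp [hv]
  · filter_upwards [hslice] with x hx hQx
    rw [hx hQx, sub_zero]

end Lift

section Homogeneous

variable {E : Type*} {F G : Type*} [NormedAddCommGroup E] [NormedSpace ℝ E]
  [NormedAddCommGroup F] [NormedSpace ℝ F] [NormedAddCommGroup G] [NormedSpace ℝ G]

lemma fderiv_clm_apply_apply {A : E → F →L[ℝ] G} {b : E → F} {x : E}
    (hA : DifferentiableAt ℝ A x) (hb : DifferentiableAt ℝ b x) (u : E) :
    fderiv ℝ (fun y => A y (b y)) x u = fderiv ℝ A x u (b x) + A x (fderiv ℝ b x u) := by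
  rw [fderiv_clm_apply hA hb]
  simp [add_comm]

lemma fderiv_clm_apply_const {A : E → F →L[ℝ] G} {x : E} (hA : DifferentiableAt ℝ A x) (u : E)
    (v : F) : fderiv ℝ (fun y => A y v) x u = fderiv ℝ A x u v := by
  simp [fderiv_clm_apply_apply hA (differentiableAt_const v)]

/-- The function `f` is homogeneous of weight `μ` with respect to the linear vector field `W`,
near `x₀`. -/
def HomogeneousFunction (W : E →L[ℝ] E) (μ : ℝ) (f : E → ℝ) (x₀ : E) : Prop :=
  ∀ᶠ x in 𝓝 x₀, fderiv ℝ f x (W x) = μ * f x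

/-- The one-form `β` is homogeneous of weight `μ` with respect to the linear vector field `W`,
near `x₀`: its Lie derivative along `W` is `μ • β`. -/
def HomogeneousOneForm (W : E →L[ℝ] E) (μ : ℝ) (β : E → E →L[ℝ] ℝ) (x₀ : E) : Prop :=
  ∀ᶠ x in 𝓝 x₀, ∀ v, fderiv ℝ β x (W x) v + β x (W v) = μ * β x v

/-- The two-form `ω` is homogeneous of weight `μ` with respect to the linear vector field `W`,
near `x₀`: its Lie derivative along `W` is `μ • ω`. -/
def HomogeneousTwoForm (W : E →L[ℝ] E) (μ : ℝ) (ω : E → E →L[ℝ] E →L[ℝ] ℝ) (x₀ : E) : Prop :=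
  ∀ᶠ x in 𝓝 x₀, ∀ u v, fderiv ℝ ω x (W x) u v + ω x (W u) v + ω x u (W v) = μ * ω x u v

/-- The lift `Ξ` is invariant under the flow of the linear vector field `W`, near `x₀`: the Lie
derivative of the endomorphism field `Ξ` along `W` vanishes. -/
def InvariantLift (W : E →L[ℝ] E) (Ξ : E → E →L[ℝ] E) (x₀ : E) : Prop :=
  ∀ᶠ x in 𝓝 x₀, ∀ v, fderiv ℝ Ξ x (W x) v + Ξ x (W v) = W (Ξ x v)

variable {W Q : E →L[ℝ] E} {Ξ : E → E →L[ℝ] E} {f f₀ : E → ℝ} {g : E → E →L[ℝ] ℝ}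
  {μ : ℝ} {x₀ : E}

lemma HomogeneousFunction.homogeneousOneForm_fderiv (hf : SmoothNear f x₀)
    (hW : HomogeneousFunction W μ f x₀) :
    HomogeneousOneForm W μ (fderiv ℝ f) x₀ := by
  filter_upwards [hW.eventually_nhds, hf.eventually_differentiableAt,
    hf.fderiv.eventually_differentiableAt, hf.eventually_fderiv_fderiv_comm]
    with x hWx hdiff hdiff' hcomm v
  have hWx' := congr($(EventuallyEq.fderiv_eq (𝕜 := ℝ) hWx) v)
  rw [fderiv_clm_apply_apply hdiff' W.differentiableAt, W.fderiv, fderiv_const_mul hdiff] at hWx'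
  rw [hcomm, hWx', smul_apply, smul_eq_mul]

lemma eventually_fderiv_eq_on_slice (Q : E →L[ℝ] F) (hf : SmoothNear f x₀)
    (hf₀ : SmoothNear f₀ x₀) (h : ∀ᶠ x in 𝓝 x₀, Q (x - x₀) = 0 → f x = f₀ x) :
    ∀ᶠ x in 𝓝 x₀, Q (x - x₀) = 0 → ∀ u, Q u = 0 → fderiv ℝ f x u = fderiv ℝ f₀ x u := by
  filter_upwards [hf.eventually_differentiableAt, hf₀.eventually_differentiableAt,
    h.eventually_nhds] with x hdiff hdiff₀ hx hslice u hu
  have hline : HasDerivAt (fun t : ℝ => x + t • u) u 0 := by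
    simpa using ((hasDerivAt_id (0 : ℝ)).smul_const u).const_add x
  have hzero : x + (0 : ℝ) • u = x := by simp
  have hderiv := hdiff.hasFDerivAt.comp_hasDerivAt_of_eq 0 hline hzero.symm
  have hderiv₀ := hdiff₀.hasFDerivAt.comp_hasDerivAt_of_eq 0 hline hzero.symm
  refine hderiv.unique (hderiv₀.congr_of_eventuallyEq ?_)
  filter_upwards [hline.continuousAt.eventually (hzero.symm ▸ hx)] with t ht
  exact ht (by rw [add_sub_right_comm, map_add, map_smul, hslice, hu, smul_zero, add_zero])

lemma eventually_fderiv_lie_eq_zero (hΞ : SmoothNear Ξ x₀) (hg : SmoothNear g x₀)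
    (hΞW : InvariantLift W Ξ x₀) (hgW : HomogeneousOneForm W μ g x₀) (hf : SmoothNear f x₀)
    (hfg : ∀ᶠ x in 𝓝 x₀, ∀ v, fderiv ℝ f x (Ξ x v) = g x v) :
    ∀ᶠ x in 𝓝 x₀, ∀ v, fderiv ℝ (fun y => fderiv ℝ f y (W y) - μ * f y) x (Ξ x v) = 0 := by
  filter_upwards [hf.eventually_differentiableAt, hf.fderiv.eventually_differentiableAt,
    hf.eventually_fderiv_fderiv_comm, hfg.eventually_nhds, hΞ.eventually_differentiableAt,
    hg.eventually_differentiableAt, hΞW, hgW] with x hdf hdf' hcomm hfg hdΞ hdg hΞW hgW v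
  have hfg_deriv : fderiv ℝ (fderiv ℝ f) x (W x) (Ξ x v) + fderiv ℝ f x (fderiv ℝ Ξ x (W x) v) =
      fderiv ℝ g x (W x) v := by
    have h := congr($(EventuallyEq.fderiv_eq (𝕜 := ℝ) (hfg.mono fun y hy => hy v)) (W x))
    rwa [fderiv_clm_apply_apply hdf' (hdΞ.clm_apply (differentiableAt_const v)),
      fderiv_clm_apply_const hdΞ, fderiv_clm_apply_const hdg] at h
  have hinvariant := congr(fderiv ℝ f x $(hΞW v))
  rw [map_add, hfg.self_of_nhds] at hinvariant
  rw [fderiv_fun_sub (hdf'.clm_apply W.differentiableAt) (hdf.const_mul μ), sub_apply,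
    fderiv_clm_apply_apply hdf' W.differentiableAt, fderiv_const_mul hdf, W.fderiv, smul_apply,
    hcomm, hfg.self_of_nhds, smul_eq_mul]
  linear_combination hfg_deriv + hgW v - hinvariant

theorem IsLift.homogeneousFunction [FiniteDimensional ℝ E] (hΞ : IsLift Q Ξ x₀)
    (hg : SmoothNear g x₀) (hΞW : InvariantLift W Ξ x₀) (hgW : HomogeneousOneForm W μ g x₀)
    (hQW : ∀ v, Q (W v) = W (Q v)) (hWx₀ : W x₀ = 0) (hf : SmoothNear f x₀)
    (hfg : ∀ᶠ x in 𝓝 x₀, ∀ v, fderiv ℝ f x (Ξ x v) = g x v) (hf₀ : SmoothNear f₀ x₀)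
    (hf₀W : HomogeneousFunction W μ f₀ x₀)
    (hslice : ∀ᶠ x in 𝓝 x₀, Q (x - x₀) = 0 → f x = f₀ x) :
    HomogeneousFunction W μ f x₀ := by
  have hzero := hΞ.eventually_eq_zero_of_fderiv_eq_zero
    (h := fun y => fderiv ℝ f y (W y) - μ * f y)
    ((hf.fderiv.clm_apply (.clm W x₀)).sub ((SmoothNear.const μ x₀).smul hf))
    (eventually_fderiv_lie_eq_zero hΞ.smooth hg hΞW hgW hf hfg) ?_
  · filter_upwards [hzero] with x hx using sub_eq_zero.1 hx
  · filter_upwards [eventually_fderiv_eq_on_slice Q hf hf₀ hslice, hslice, hf₀W]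
      with x hderiv hx hf₀W hQx
    have hQWx : Q (W x) = 0 := by
      have hWx : W x = W (x - x₀) := by rw [map_sub, hWx₀, sub_zero]
      rw [hWx, hQW, hQx, map_zero]
    rw [hderiv hQx _ hQWx, hx hQx, hf₀W, sub_self]

end Homogeneous

section KernelLift

variable {X E F : Type*} [NormedAddCommGroup X] [NormedSpace ℝ X] [NormedAddCommGroup E]
  [NormedSpace ℝ E] [NormedAddCommGroup F] [NormedSpace ℝ F] {Q : E →L[ℝ] E}

lemma exists_leftInverse_on_ker [FiniteDimensional ℝ F] {B : E →L[ℝ] F}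
    (hB : ∀ v, B v = 0 → Q v = 0 → v = 0) :
    ∃ C : F →L[ℝ] E, (∀ y, Q (C y) = 0) ∧ ∀ v, Q v = 0 → C (B v) = v := by
  let K := LinearMap.ker Q.toLinearMap
  obtain ⟨C, hC⟩ := LinearMap.exists_leftInverse_of_injective (B.toLinearMap ∘ₗ K.subtype)
    (LinearMap.ker_eq_bot'.2 fun v hv => Subtype.ext (hB v hv v.2))
  refine ⟨(K.subtype ∘ₗ C).toContinuousLinearMap, fun y => (C y).2, fun v hv => ?_⟩
  exact congrArg Subtype.val (LinearMap.congr_fun hC ⟨v, hv⟩)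

variable [FiniteDimensional ℝ E]

lemma apply_eq_zero_of_comp_apply_eq_zero {B : E →L[ℝ] F} {C : F →L[ℝ] E}
    (hinj : ∀ v, C (B v) = 0 → Q v = 0 → v = 0)
    (hdim : Module.finrank ℝ (LinearMap.range Q.toLinearMap) ≤
      Module.finrank ℝ (LinearMap.ker B.toLinearMap)) {v : E} (hv : C (B v) = 0) : B v = 0 := by
  let K := LinearMap.ker (C ∘L B).toLinearMap
  have hle : LinearMap.ker B.toLinearMap ≤ K := fun u hu => by
    have hu : B u = 0 := hu
    simp [K, hu]
  have hfinrank : Module.finrank ℝ K ≤ Module.finrank ℝ (LinearMap.range Q.toLinearMap) := by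
    refine LinearMap.finrank_le_finrank_of_injective
      (f := Q.toLinearMap.restrict fun u (_ : u ∈ K) => LinearMap.mem_range_self _ u) ?_
    exact LinearMap.ker_eq_bot.1 (LinearMap.ker_eq_bot'.2 fun u hu =>
      Subtype.ext (hinj u u.2 (congrArg Subtype.val hu)))
  have hmem : v ∈ LinearMap.ker B.toLinearMap :=
    Submodule.eq_of_le_of_finrank_le hle (hfinrank.trans hdim) ▸ hv
  exact hmem

lemma isUnit_of_injective {A : E →L[ℝ] E} (hA : ∀ v, A v = 0 → v = 0) : IsUnit A := by
  let e := (LinearEquiv.ofInjectiveEndo A.toLinearMap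
    (LinearMap.ker_eq_bot.1 (LinearMap.ker_eq_bot'.2 hA))).toContinuousLinearEquiv
  exact ⟨(ContinuousLinearEquiv.unitsEquiv ℝ E).symm e, by ext; rfl⟩

theorem exists_smoothNear_kernel_lift [FiniteDimensional ℝ F] {B : X → E →L[ℝ] F} {x₀ : X}
    (hB : SmoothNear B x₀) (hQ : ∀ v, Q (Q v) = Q v) (hinj : ∀ v, B x₀ v = 0 → Q v = 0 → v = 0)
    (hdim : ∀ᶠ x in 𝓝 x₀, Module.finrank ℝ (LinearMap.range Q.toLinearMap) ≤
      Module.finrank ℝ (LinearMap.ker (B x).toLinearMap)) :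
    ∃ Ξ : X → E →L[ℝ] E, SmoothNear Ξ x₀ ∧ ∀ᶠ x in 𝓝 x₀, (∀ v, Q (Ξ x v) = Q v) ∧
      (∀ v, Ξ x (Q v) = Ξ x v) ∧ (∀ v, B x (Ξ x v) = 0) ∧ ∀ v, B x v = 0 → Q v = 0 → v = 0 := by
  have := FiniteDimensional.complete ℝ E
  obtain ⟨C, hQC, hCB⟩ := exists_leftInverse_on_ker hinj
  let A : X → E →L[ℝ] E := fun x => C ∘L B x + Q
  have hA : SmoothNear A x₀ := (hB.clm_comp (.compL ℝ E F E C)).add (.const Q x₀)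
  have hQA (x : X) (v : E) : Q (A x v) = Q v := by simp [A, hQC, hQ]
  have hunit₀ : IsUnit (A x₀) := isUnit_of_injective fun v hv => by
    have hQv : Q v = 0 := by rw [← hQA x₀, hv, map_zero]
    simpa [A, hQv, hCB v hQv] using hv
  have hunit : ∀ᶠ x in 𝓝 x₀, IsUnit (A x) :=
    hA.continuousAt.eventually (Units.isOpen.mem_nhds hunit₀)
  refine ⟨fun x => Ring.inverse (A x) ∘L Q, SmoothNear.clm_comp
    ((ContinuousLinearMap.compL ℝ E E E).flip Q) (f := fun x => Ring.inverse (A x)) ?_, ?_⟩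
  · filter_upwards [hA, hunit] with x hAx ⟨u, hu⟩
    exact (hu ▸ contDiffAt_ringInverse ℝ u : ContDiffAt ℝ _ Ring.inverse (A x)).comp x hAx
  filter_upwards [hunit, hdim] with x hunit hdim
  have hinv (v : E) : A x (Ring.inverse (A x) v) = v :=
    congr($(Ring.mul_inverse_cancel _ hunit) v)
  have hinj_x (v : E) (hv : A x v = 0) : v = 0 := by
    have h := congr($(Ring.inverse_mul_cancel _ hunit) v)
    simpa [hv] using h.symm
  have hproj (v : E) : Q (Ring.inverse (A x) (Q v)) = Q v := by rw [← hQA x, hinv, hQ]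
  refine ⟨hproj, fun v => by simp [hQ], fun v => ?_,
    fun v hBv hQv => hinj_x v (by simp [A, hBv, hQv])⟩
  refine apply_eq_zero_of_comp_apply_eq_zero (C := C)
    (fun u hC hQu => hinj_x u (by simp [A, hC, hQu])) hdim ?_
  have h := hinv (Q v)
  rwa [add_apply, hproj, add_eq_right] at h

lemma exists_coordinate_projection {ι : Type*} [Finite ι] (K : Submodule ℝ (ι → ℝ)) :
    ∃ s : ι → ℝ, s * s = s ∧ (∀ v ∈ K, s * v = 0 → v = 0) ∧
      Module.finrank ℝ (LinearMap.range (LinearMap.mulLeft ℝ s)) ≤ Module.finrank ℝ K := by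
  classical
  have := Fintype.ofFinite ι
  let coord : ι → Module.Dual ℝ K := fun i => LinearMap.proj i ∘ₗ K.subtype
  obtain ⟨κ, a, ha, hspan, hli⟩ := exists_linearIndependent' ℝ coord
  have := Fintype.ofInjective a ha
  let s : ι → ℝ := (range a).indicator 1
  have hs (k : κ) : s (a k) = 1 := indicator_of_mem (mem_range_self k) _
  refine ⟨s, ?_, fun v hv hsv => ?_, ?_⟩
  · ext i
    by_cases hi : i ∈ range a <;> simp [s, hi]
  · have hle : Submodule.span ℝ (range coord) ≤
        LinearMap.ker (Module.Dual.eval ℝ K ⟨v, hv⟩) := by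
      rw [← hspan, Submodule.span_le]
      rintro _ ⟨k, rfl⟩
      simpa [hs, coord] using congrFun hsv (a k)
    ext i
    exact hle (Submodule.subset_span (mem_range_self i))
  · refine le_trans ?_ (hli.fintype_card_le_finrank.trans_eq Subspace.dual_finrank_eq)
    rw [← Module.finrank_fintype_fun_eq_card ℝ]
    refine LinearMap.finrank_le_finrank_of_injective
      (f := LinearMap.funLeft ℝ ℝ a ∘ₗ (LinearMap.range (LinearMap.mulLeft ℝ s)).subtype) ?_
    refine LinearMap.ker_eq_bot.1 (LinearMap.ker_eq_bot'.2 ?_)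
    rintro ⟨_, v, rfl⟩ hv
    ext i
    by_cases hi : i ∈ range a
    · obtain ⟨k, rfl⟩ := hi
      exact congrFun hv k
    · simp [s, hi]

end KernelLift

section LinearAlgebra

variable {E : Type*} [NormedAddCommGroup E] [NormedSpace ℝ E]

/-- The wedge product of two covectors, as a bilinear form. -/
noncomputable def wedge (α β : E →L[ℝ] ℝ) : E →L[ℝ] E →L[ℝ] ℝ := α.smulRight β - β.smulRight α

lemma wedge_apply (α β : E →L[ℝ] ℝ) (u : E) : wedge α β u = α u • β - β u • α := rfl

lemma wedge_apply_apply (α β : E →L[ℝ] ℝ) (u v : E) : wedge α β u v = α u * β v - α v * β u := by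
  simp [wedge_apply, mul_comm]

variable {ω : E →L[ℝ] E →L[ℝ] ℝ}

lemma alternating_apply_self (hω : ∀ u v, ω u v = -ω v u) (u : E) : ω u u = 0 :=
  self_eq_neg.1 (hω u u)

theorem exists_apply_eq_of_ker_le [FiniteDimensional ℝ E] (hω : ∀ u v, ω u v = -ω v u)
    {β : E →L[ℝ] ℝ} (hβ : ∀ v, ω v = 0 → β v = 0) : ∃ X, ω X = β := by
  let ω' : E →ₗ[ℝ] Module.Dual ℝ E := LinearMap.toContinuousLinearMap.symm.toLinearMap ∘ₗ ω
  have hmem : β.toLinearMap ∈ (LinearMap.ker ω').dualAnnihilator := by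
    rw [Submodule.mem_dualAnnihilator]
    exact fun v hv => hβ v (LinearMap.toContinuousLinearMap.symm.map_eq_zero_iff.1 hv)
  rw [← LinearMap.range_dualMap_eq_dualAnnihilator_ker] at hmem
  obtain ⟨φ, hφ⟩ := hmem
  obtain ⟨Y, rfl⟩ := (Module.evalEquiv ℝ E).surjective φ
  refine ⟨-Y, ContinuousLinearMap.ext fun v => ?_⟩
  have hY : ω v Y = β v := LinearMap.congr_fun hφ v
  rw [map_neg, neg_apply, ← hω, hY]

lemma finrank_ker_sub_wedge [FiniteDimensional ℝ E] (hω : ∀ u v, ω u v = -ω v u)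
    {α β : E →L[ℝ] ℝ} {X Y : E} (hX : ω X = β) (hY : ω Y = α) (hαX : α X = 1) :
    Module.finrank ℝ (LinearMap.ker (ω - wedge α β).toLinearMap) =
      Module.finrank ℝ (LinearMap.ker ω.toLinearMap) + 2 := by
  let f : (LinearMap.ker ω.toLinearMap × ℝ × ℝ) →ₗ[ℝ] E :=
    (LinearMap.ker ω.toLinearMap).subtype.coprod
      ((LinearMap.toSpanSingleton ℝ E X).coprod (LinearMap.toSpanSingleton ℝ E Y))
  have hβX : β X = 0 := hX ▸ alternating_apply_self hω X
  have hαY : α Y = 0 := hY ▸ alternating_apply_self hω Y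
  have hβY : β Y = -1 := by rw [← hX, hω, hY, hαX]
  have hker (k : LinearMap.ker ω.toLinearMap) : ω k = 0 := k.2
  have hαker (k : LinearMap.ker ω.toLinearMap) : α k = 0 := by rw [← hY, hω, hker]; simp
  have hβker (k : LinearMap.ker ω.toLinearMap) : β k = 0 := by rw [← hX, hω, hker]; simp
  have hinj : Function.Injective f := by
    refine LinearMap.ker_eq_bot.1 (LinearMap.ker_eq_bot'.2 ?_)
    rintro ⟨k, a, b⟩ (h : (k : E) + (a • X + b • Y) = 0)
    obtain rfl : a = 0 := by simpa [hαker, hαX, hαY] using congrArg α h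
    obtain rfl : b = 0 := by simpa [hβker, hβX, hβY] using congrArg β h
    simpa using h
  have hrange : LinearMap.range f = LinearMap.ker (ω - wedge α β).toLinearMap := by
    ext v
    have hmem : v ∈ LinearMap.ker (ω - wedge α β).toLinearMap ↔ ω v = α v • β - β v • α :=
      sub_eq_zero
    rw [hmem]
    constructor
    · rintro ⟨⟨k, a, b⟩, rfl⟩
      simp [f, hker, hX, hY, hαker, hβker, hαX, hαY, hβX, hβY]
      module
    · intro hv
      have hk : ω (v - α v • X + β v • Y) = 0 := by
        rw [map_add, map_sub, map_smul, map_smul, hX, hY, hv]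
        abel
      exact ⟨(⟨_, hk⟩, α v, -β v), by simp [f]; abel⟩
  rw [← hrange, LinearMap.finrank_range_of_inj hinj]
  simp

theorem finrank_range_sub_wedge [FiniteDimensional ℝ E] (hω : ∀ u v, ω u v = -ω v u)
    {α β : E →L[ℝ] ℝ} {X Y : E} (hX : ω X = β) (hY : ω Y = α) (hαX : α X = 1) :
    Module.finrank ℝ (LinearMap.range (ω - wedge α β).toLinearMap) + 2 =
      Module.finrank ℝ (LinearMap.range ω.toLinearMap) := by
  have hω_rank := LinearMap.finrank_range_add_finrank_ker ω.toLinearMap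
  have hsub_rank := LinearMap.finrank_range_add_finrank_ker (ω - wedge α β).toLinearMap
  have hker := finrank_ker_sub_wedge hω hX hY hαX
  omega

variable {ι : Type*} [Fintype ι] {p q : ι → E →L[ℝ] ℝ}

lemma linearIndependent_of_finrank_range_sum_wedge
    (hrank : Module.finrank ℝ (LinearMap.range (∑ i, wedge (p i) (q i)).toLinearMap) =
      2 * Fintype.card ι) :
    LinearIndependent ℝ (Sum.elim q p) := by
  rw [linearIndependent_iff_card_le_finrank_span]
  have hle : LinearMap.range (∑ i, wedge (p i) (q i)).toLinearMap ≤
      Submodule.span ℝ (range (Sum.elim q p)) := by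
    rintro _ ⟨u, rfl⟩
    change (∑ i, wedge (p i) (q i)) u ∈ _
    rw [sum_apply]
    exact Submodule.sum_mem _ fun i _ => Submodule.sub_mem _
      (Submodule.smul_mem _ _ (Submodule.subset_span ⟨.inl i, rfl⟩))
      (Submodule.smul_mem _ _ (Submodule.subset_span ⟨.inr i, rfl⟩))
  have := FiniteDimensional.span_of_finite ℝ (finite_range (Sum.elim q p))
  have hcard := hrank ▸ Submodule.finrank_mono hle
  rwa [Fintype.card_sum, ← two_mul]

lemma apply_eq_zero_of_sum_wedge_apply_eq_zero (hpq : LinearIndependent ℝ (Sum.elim q p)) {X : E}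
    (hX : (∑ i, wedge (p i) (q i)) X = 0) (i : ι) : p i X = 0 ∧ q i X = 0 := by
  have hcoeff := Fintype.linearIndependent_iff.1 hpq
    (Sum.elim (fun i => p i X) fun i => -q i X) (by
      rw [← hX, sum_apply, Fintype.sum_sum_type, ← Finset.sum_add_distrib]
      simp [wedge_apply, sub_eq_add_neg])
  exact ⟨hcoeff (.inl i), neg_eq_zero.1 (hcoeff (.inr i))⟩

end LinearAlgebra

section CharacteristicLift

variable {E : Type*} [NormedAddCommGroup E] [NormedSpace ℝ E]

/-- The germ at `x₀` of the two-form `ω` is smooth, alternating, closed and of constant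
rank `k`. -/
structure IsPresymplectic (ω : E → E →L[ℝ] E →L[ℝ] ℝ) (k : ℕ) (x₀ : E) : Prop where
  smooth : SmoothNear ω x₀
  alternating : ∀ᶠ x in 𝓝 x₀, ∀ u v, ω x u v = -ω x v u
  closed : ∀ᶠ x in 𝓝 x₀, ∀ u v z,
    fderiv ℝ ω x u v z + fderiv ℝ ω x v z u + fderiv ℝ ω x z u v = 0
  rank : ∀ᶠ x in 𝓝 x₀, Module.finrank ℝ (LinearMap.range (ω x).toLinearMap) = k

/-- Near `x₀`, the smooth one-form `β` satisfies `dβ = c ω` and vanishes on the kernel of `ω`.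
Both `c = 0` (`β` closed) and `c ≠ 0` (`β` a multiple of a primitive) are of interest. -/
structure IsScaledPrimitive (ω : E → E →L[ℝ] E →L[ℝ] ℝ) (c : ℝ) (β : E → E →L[ℝ] ℝ) (x₀ : E) :
    Prop where
  smooth : SmoothNear β x₀
  exteriorDeriv : ∀ᶠ x in 𝓝 x₀, ∀ u v, fderiv ℝ β x u v - fderiv ℝ β x v u = c * ω x u v
  apply_ker : ∀ᶠ x in 𝓝 x₀, ∀ v, ω x v = 0 → β x v = 0

/-- A lift for the characteristic distribution `{v | ω v ∈ ℝ β}`, with `ω (Ξ v) = g v • β`. For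
`β = 0` this is the kernel of `ω`. -/
structure IsCharacteristicLift (ω : E → E →L[ℝ] E →L[ℝ] ℝ) (β : E → E →L[ℝ] ℝ) (Q : E →L[ℝ] E)
    (Ξ : E → E →L[ℝ] E) (g : E → E →L[ℝ] ℝ) (x₀ : E) : Prop extends IsLift Q Ξ x₀ where
  smooth_coeff : SmoothNear g x₀
  coeff_proj : ∀ᶠ x in 𝓝 x₀, ∀ v, g x (Q v) = g x v
  form_apply : ∀ᶠ x in 𝓝 x₀, ∀ v, ω x (Ξ x v) = g x v • β x
  eq_zero : ∀ᶠ x in 𝓝 x₀, ∀ v (s : ℝ), ω x v = s • β x → Q v = 0 → v = 0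

variable {ω : E → E →L[ℝ] E →L[ℝ] ℝ} {β g : E → E →L[ℝ] ℝ} {Ξ : E → E →L[ℝ] E}
  {W Q : E →L[ℝ] E} {f : E → ℝ} {c w l : ℝ} {k : ℕ} {x₀ : E}

lemma IsPresymplectic.eventually_fderiv_alternating (hω : IsPresymplectic ω k x₀) :
    ∀ᶠ x in 𝓝 x₀, ∀ z u v, fderiv ℝ ω x z u v = -fderiv ℝ ω x z v u := by
  filter_upwards [hω.smooth.eventually_differentiableAt, hω.alternating.eventually_nhds]
    with x hdiff halt z u v
  have hcoord (u v : E) : fderiv ℝ (fun y => ω y u v) x z = fderiv ℝ ω x z u v := by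
    rw [fderiv_clm_apply_const (hdiff.clm_apply (differentiableAt_const u)),
      fderiv_clm_apply_const hdiff]
  have h := congr($(EventuallyEq.fderiv_eq (𝕜 := ℝ) (halt.mono fun y hy => hy u v)) z)
  rwa [fderiv_fun_neg, neg_apply, hcoord, hcoord] at h

lemma IsLift.eventually_proj_fderiv_apply (hΞ : IsLift Q Ξ x₀) :
    ∀ᶠ x in 𝓝 x₀, ∀ z v, Q (fderiv ℝ Ξ x z v) = 0 := by
  filter_upwards [hΞ.smooth.eventually_differentiableAt, hΞ.proj_apply.eventually_nhds]
    with x hdiff hproj z v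
  have h := congr($(EventuallyEq.fderiv_eq (𝕜 := ℝ) (hproj.mono fun y hy => hy v)) z)
  rwa [fderiv_clm_apply_apply (differentiableAt_const Q)
    (hdiff.clm_apply (differentiableAt_const v)), fderiv_clm_apply_const hdiff, fderiv_fun_const,
    fderiv_fun_const, Pi.zero_apply, zero_apply, zero_apply, zero_add] at h

namespace IsCharacteristicLift

lemma eventually_apply_eq_self (hΞ : IsCharacteristicLift ω β Q Ξ g x₀) :
    ∀ᶠ x in 𝓝 x₀, ∀ v (s : ℝ), ω x v = s • β x → Ξ x v = v := by
  filter_upwards [hΞ.form_apply, hΞ.eq_zero, hΞ.proj_apply] with x hform heq hproj v s hv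
  refine sub_eq_zero.1 (heq _ (g x v - s) ?_ ?_)
  · rw [map_sub, hform, hv]
    module
  · rw [map_sub, hproj, sub_self]

lemma eventually_fderiv_form_apply (hΞ : IsCharacteristicLift ω β Q Ξ g x₀)
    (hω : SmoothNear ω x₀) (hβ : SmoothNear β x₀) :
    ∀ᶠ x in 𝓝 x₀, ∀ z v, fderiv ℝ ω x z (Ξ x v) + ω x (fderiv ℝ Ξ x z v) =
      fderiv ℝ g x z v • β x + g x v • fderiv ℝ β x z := by
  filter_upwards [hω.eventually_differentiableAt, hβ.eventually_differentiableAt,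
    hΞ.smooth.eventually_differentiableAt, hΞ.smooth_coeff.eventually_differentiableAt,
    hΞ.form_apply.eventually_nhds] with x hdω hdβ hdΞ hdg hform z v
  have h := congr($(EventuallyEq.fderiv_eq (𝕜 := ℝ) (hform.mono fun y hy => hy v)) z)
  rw [fderiv_clm_apply_apply hdω (hdΞ.clm_apply (differentiableAt_const v)),
    fderiv_clm_apply_const hdΞ, fderiv_fun_smul (hdg.clm_apply (differentiableAt_const v)) hdβ,
    add_apply, smul_apply, ContinuousLinearMap.smulRight_apply, fderiv_clm_apply_const hdg] at h
  rw [h, add_comm]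

lemma eventually_oneForm_apply (hΞ : IsCharacteristicLift ω β Q Ξ g x₀)
    (hω : IsPresymplectic ω k x₀) (hβ : IsScaledPrimitive ω c β x₀) :
    ∀ᶠ x in 𝓝 x₀, ∀ v, β x (Ξ x v) = 0 := by
  filter_upwards [hω.alternating, hβ.apply_ker, hΞ.form_apply] with x halt hker hform v
  rcases eq_or_ne (g x v) 0 with hg | hg
  · exact hker _ (by rw [hform, hg, zero_smul])
  · have h := alternating_apply_self halt (Ξ x v)
    rw [hform, smul_apply, smul_eq_mul] at h
    exact (mul_eq_zero.1 h).resolve_left hg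

lemma eventually_fderiv_oneForm_apply (hΞ : IsCharacteristicLift ω β Q Ξ g x₀)
    (hω : IsPresymplectic ω k x₀) (hβ : IsScaledPrimitive ω c β x₀) :
    ∀ᶠ x in 𝓝 x₀, ∀ z v, fderiv ℝ β x z (Ξ x v) + β x (fderiv ℝ Ξ x z v) = 0 := by
  filter_upwards [hβ.smooth.eventually_differentiableAt, hΞ.smooth.eventually_differentiableAt,
    (hΞ.eventually_oneForm_apply hω hβ).eventually_nhds] with x hdβ hdΞ happly z v
  have h := congr($(EventuallyEq.fderiv_eq (𝕜 := ℝ) (happly.mono fun y hy => hy v)) z)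
  rwa [fderiv_clm_apply_apply hdβ (hdΞ.clm_apply (differentiableAt_const v)),
    fderiv_clm_apply_const hdΞ, fderiv_fun_const, Pi.zero_apply, zero_apply] at h

lemma eventually_form_bracket (hΞ : IsCharacteristicLift ω β Q Ξ g x₀)
    (hω : IsPresymplectic ω k x₀) (hβ : IsScaledPrimitive ω c β x₀) :
    ∀ᶠ x in 𝓝 x₀, ∀ v₁ v₂, ω x (fderiv ℝ Ξ x (Ξ x v₁) v₂ - fderiv ℝ Ξ x (Ξ x v₂) v₁) =
      (fderiv ℝ g x (Ξ x v₁) v₂ - fderiv ℝ g x (Ξ x v₂) v₁) • β x := by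
  filter_upwards [hΞ.eventually_fderiv_oneForm_apply hω hβ,
    hΞ.eventually_fderiv_form_apply hω.smooth hβ.smooth, hω.eventually_fderiv_alternating,
    hω.alternating, hω.closed, hβ.exteriorDeriv, hΞ.form_apply, hΞ.eventually_oneForm_apply hω hβ]
    with x hdβΞ hdform hdalt halt hclosed hdβ hform hβΞ v₁ v₂
  refine ContinuousLinearMap.ext fun u => ?_
  have h₁₂ := congr($(hdform (Ξ x v₁) v₂) u)
  have h₂₁ := congr($(hdform (Ξ x v₂) v₁) u)
  have hu := congr($(hdform u v₁) (Ξ x v₂))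
  have hdβ₁ := hdβ (Ξ x v₁) u
  have hdβ₂ := hdβ (Ξ x v₂) u
  simp only [hform, add_apply, smul_apply, smul_eq_mul, map_sub, sub_apply, hβΞ,
    halt (fderiv ℝ Ξ x u v₁) (Ξ x v₂)] at h₁₂ h₂₁ hu hdβ₁ hdβ₂ ⊢
  linear_combination h₁₂ - h₂₁ - hclosed (Ξ x v₁) (Ξ x v₂) u + hu + hdalt (Ξ x v₂) u (Ξ x v₁) +
    g x v₂ * hdβΞ u v₁ + g x v₂ * hdβ₁ - g x v₁ * hdβ₂

theorem isClosedAlong_self (hΞ : IsCharacteristicLift ω β Q Ξ g x₀)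
    (hω : IsPresymplectic ω k x₀) (hβ : IsScaledPrimitive ω c β x₀) : IsClosedAlong Ξ Ξ x₀ := by
  filter_upwards [hΞ.eventually_form_bracket hω hβ, hΞ.eq_zero,
    hΞ.toIsLift.eventually_proj_fderiv_apply] with x hbracket heq hproj v₁ v₂
  exact sub_eq_zero.1 (heq _ _ (hbracket v₁ v₂) (by rw [map_sub, hproj, hproj, sub_zero]))

theorem isClosedAlong_coeff (hΞ : IsCharacteristicLift ω β Q Ξ g x₀)
    (hω : IsPresymplectic ω k x₀) (hβ : IsScaledPrimitive ω c β x₀) (hβ₀ : β x₀ ≠ 0) :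
    IsClosedAlong Ξ g x₀ := by
  filter_upwards [hΞ.eventually_form_bracket hω hβ, hΞ.isClosedAlong_self hω hβ,
    hβ.smooth.continuousAt.eventually_ne hβ₀] with x hbracket hflat hβx v₁ v₂
  have h := hbracket v₁ v₂
  rw [hflat, sub_self, map_zero, eq_comm, smul_eq_zero] at h
  exact sub_eq_zero.1 (h.resolve_right hβx)

lemma eventually_form_lieDeriv (hΞ : IsCharacteristicLift ω β Q Ξ g x₀) (hω : SmoothNear ω x₀)
    (hβ : SmoothNear β x₀) (hωW : HomogeneousTwoForm W w ω x₀)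
    (hβW : HomogeneousOneForm W l β x₀) :
    ∀ᶠ x in 𝓝 x₀, ∀ v, ω x (W (Ξ x v) - fderiv ℝ Ξ x (W x) v) =
      ((w - l) * g x v - fderiv ℝ g x (W x) v) • β x := by
  filter_upwards [hΞ.eventually_fderiv_form_apply hω hβ, hΞ.form_apply, hωW, hβW]
    with x hdform hform hωW hβW v
  refine ContinuousLinearMap.ext fun u => ?_
  have hdform_u := congr($(hdform (W x) v) u)
  have hωW_u := hωW (Ξ x v) u
  simp only [hform, add_apply, smul_apply, smul_eq_mul, map_sub, sub_apply]
    at hdform_u hωW_u ⊢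
  linear_combination hωW_u - hdform_u - g x v * hβW u

theorem invariantLift (hΞ : IsCharacteristicLift ω β Q Ξ g x₀) (hω : SmoothNear ω x₀)
    (hβ : SmoothNear β x₀) (hωW : HomogeneousTwoForm W w ω x₀)
    (hβW : HomogeneousOneForm W l β x₀) (hQW : ∀ v, Q (W v) = W (Q v)) :
    InvariantLift W Ξ x₀ := by
  filter_upwards [hΞ.eventually_form_lieDeriv hω hβ hωW hβW, hΞ.eventually_apply_eq_self,
    hΞ.toIsLift.eventually_proj_fderiv_apply, hΞ.proj_apply, hΞ.apply_proj]
    with x hlie hself hdproj hproj happly v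
  have hZ := hself _ _ (hlie v)
  rw [← happly, map_sub, hdproj, sub_zero, hQW, hproj, ← hQW, happly] at hZ
  rw [hZ, add_sub_cancel]

theorem homogeneousOneForm_coeff (hΞ : IsCharacteristicLift ω β Q Ξ g x₀) (hω : SmoothNear ω x₀)
    (hβ : SmoothNear β x₀) (hωW : HomogeneousTwoForm W w ω x₀)
    (hβW : HomogeneousOneForm W l β x₀) (hQW : ∀ v, Q (W v) = W (Q v)) (hβ₀ : β x₀ ≠ 0) :
    HomogeneousOneForm W (w - l) g x₀ := by
  filter_upwards [hΞ.eventually_form_lieDeriv hω hβ hωW hβW, hΞ.form_apply,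
    hΞ.invariantLift hω hβ hωW hβW hQW, hβ.continuousAt.eventually_ne hβ₀]
    with x hlie hform hinv hβx v
  have h := hlie v
  rw [← hinv, add_sub_cancel_left, hform, smul_left_inj hβx] at h
  linear_combination h

end IsCharacteristicLift

end CharacteristicLift

section AdaptedFunctions

variable {E : Type*} [NormedAddCommGroup E] [NormedSpace ℝ E]
  {ω : E → E →L[ℝ] E →L[ℝ] ℝ} {β g : E → E →L[ℝ] ℝ} {Ξ : E → E →L[ℝ] E} {Q : E →L[ℝ] E}
  {f₀ : E → ℝ} {c : ℝ} {k : ℕ} {x₀ : E}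

/-- The smooth function `f` is conjugate to the one-form `β` with respect to `ω`, near `x₀`: its
differential is `1` on the solutions `X` of `ω X = β` and `0` on the kernel of `ω`. -/
structure IsConjugateFunction (ω : E → E →L[ℝ] E →L[ℝ] ℝ) (β : E → E →L[ℝ] ℝ) (f : E → ℝ)
    (x₀ : E) : Prop where
  smooth : SmoothNear f x₀
  fderiv_apply : ∀ᶠ x in 𝓝 x₀, ∀ v (s : ℝ), ω x v = s • β x → fderiv ℝ f x v = s

lemma isScaledPrimitive_zero (ω : E → E →L[ℝ] E →L[ℝ] ℝ) (x₀ : E) :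
    IsScaledPrimitive ω 0 0 x₀ :=
  ⟨.const 0 x₀, by simp, by simp⟩

lemma homogeneousOneForm_zero (W : E →L[ℝ] E) (μ : ℝ) (x₀ : E) : HomogeneousOneForm W μ 0 x₀ := by
  simp [HomogeneousOneForm]

/-- The operator `(v, s) ↦ ω v - s • β`, whose kernel projects onto the characteristic
distribution `{v | ω v ∈ ℝ β}`. -/
noncomputable def characteristicOperator (ω : E →L[ℝ] E →L[ℝ] ℝ) (β : E →L[ℝ] ℝ) :
    E × ℝ →L[ℝ] E →L[ℝ] ℝ :=
  ω ∘L .fst ℝ E ℝ - (ContinuousLinearMap.snd ℝ E ℝ).smulRight β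

lemma characteristicOperator_apply (ω : E →L[ℝ] E →L[ℝ] ℝ) (β : E →L[ℝ] ℝ) (v : E) (s : ℝ) :
    characteristicOperator ω β (v, s) = ω v - s • β := rfl

lemma smoothNear_characteristicOperator (hω : SmoothNear ω x₀) (hβ : SmoothNear β x₀) :
    SmoothNear (fun x => characteristicOperator (ω x) (β x)) x₀ := by
  filter_upwards [hω, hβ] with x hωx hβx
  exact (hωx.clm_comp contDiffAt_const).sub (contDiffAt_const.smulRight hβx)

variable [FiniteDimensional ℝ E]

lemma IsPresymplectic.eventually_finrank_ker_eq (hω : IsPresymplectic ω k x₀) :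
    ∀ᶠ x in 𝓝 x₀, Module.finrank ℝ (LinearMap.ker (ω x).toLinearMap) =
      Module.finrank ℝ (LinearMap.ker (ω x₀).toLinearMap) := by
  filter_upwards [hω.rank] with x hx
  have h := LinearMap.finrank_range_add_finrank_ker (ω x).toLinearMap
  have h₀ := LinearMap.finrank_range_add_finrank_ker (ω x₀).toLinearMap
  have hx₀ := hω.rank.self_of_nhds
  omega

theorem IsPresymplectic.exists_isCharacteristicLift_zero (hω : IsPresymplectic ω k x₀)
    (hQ : ∀ v, Q (Q v) = Q v) (hinj : ∀ v, ω x₀ v = 0 → Q v = 0 → v = 0)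
    (hdim : Module.finrank ℝ (LinearMap.range Q.toLinearMap) ≤
      Module.finrank ℝ (LinearMap.ker (ω x₀).toLinearMap)) :
    ∃ Ξ, IsCharacteristicLift ω 0 Q Ξ 0 x₀ := by
  obtain ⟨Ξ, hΞ, hΞω⟩ := exists_smoothNear_kernel_lift hω.smooth hQ hinj
    (hω.eventually_finrank_ker_eq.mono fun x hx => hdim.trans_eq hx.symm)
  refine ⟨Ξ, ⟨hΞ, hΞω.mono fun x hx => hx.1, hΞω.mono fun x hx => hx.2.1⟩, .const 0 x₀, by simp,
    hΞω.mono fun x hx v => by simpa using hx.2.2.1 v, ?_⟩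
  filter_upwards [hΞω] with x ⟨_, _, _, heq⟩ v s hv hQv
  exact heq v (by simpa using hv) hQv

lemma finrank_ker_characteristicOperator {ω : E →L[ℝ] E →L[ℝ] ℝ} {β : E →L[ℝ] ℝ}
    (hβ : ∃ X, ω X = β) :
    Module.finrank ℝ (LinearMap.ker (characteristicOperator ω β).toLinearMap) =
      Module.finrank ℝ (LinearMap.ker ω.toLinearMap) + 1 := by
  obtain ⟨X, rfl⟩ := hβ
  have hrange : LinearMap.range (characteristicOperator ω (ω X)).toLinearMap =
      LinearMap.range ω.toLinearMap := by
    apply le_antisymm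
    · rintro _ ⟨⟨v, s⟩, rfl⟩
      exact ⟨v - s • X, by simp [characteristicOperator_apply]⟩
    · rintro _ ⟨v, rfl⟩
      exact ⟨(v, 0), by simp [characteristicOperator_apply]⟩
  have h := LinearMap.finrank_range_add_finrank_ker ω.toLinearMap
  have h' := LinearMap.finrank_range_add_finrank_ker (characteristicOperator ω (ω X)).toLinearMap
  rw [hrange, Module.finrank_prod, Module.finrank_self] at h'
  omega

lemma finrank_range_prodMap_zero_le (Q : E →L[ℝ] E) :
    Module.finrank ℝ (LinearMap.range (Q.prodMap (0 : ℝ →L[ℝ] ℝ)).toLinearMap) ≤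
      Module.finrank ℝ (LinearMap.range Q.toLinearMap) := by
  have hrange : LinearMap.range (Q.prodMap (0 : ℝ →L[ℝ] ℝ)).toLinearMap =
      (LinearMap.range Q.toLinearMap).map (LinearMap.inl ℝ E ℝ) := by
    rw [← LinearMap.range_comp]
    apply le_antisymm
    · rintro _ ⟨⟨v, s⟩, rfl⟩
      exact ⟨v, rfl⟩
    · rintro _ ⟨v, rfl⟩
      exact ⟨(v, 0), rfl⟩
  exact hrange ▸ Submodule.finrank_map_le _ _

theorem IsScaledPrimitive.exists_isCharacteristicLift (hβ : IsScaledPrimitive ω c β x₀)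
    (hω : IsPresymplectic ω k x₀) (hβ₀ : β x₀ ≠ 0) (hQ : ∀ v, Q (Q v) = Q v)
    (hinj : ∀ v (s : ℝ), ω x₀ v = s • β x₀ → Q v = 0 → v = 0)
    (hdim : Module.finrank ℝ (LinearMap.range Q.toLinearMap) ≤
      Module.finrank ℝ (LinearMap.ker (characteristicOperator (ω x₀) (β x₀)).toLinearMap)) :
    ∃ Ξ g, IsCharacteristicLift ω β Q Ξ g x₀ := by
  let Q' : E × ℝ →L[ℝ] E × ℝ := Q.prodMap 0
  have hfinrank : ∀ᶠ x in 𝓝 x₀, Module.finrank ℝ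
      (LinearMap.ker (characteristicOperator (ω x) (β x)).toLinearMap) =
      Module.finrank ℝ (LinearMap.ker (ω x).toLinearMap) + 1 := by
    filter_upwards [hω.alternating, hβ.apply_ker] with x halt hker
    exact finrank_ker_characteristicOperator (exists_apply_eq_of_ker_le halt hker)
  have hinj' : ∀ v, characteristicOperator (ω x₀) (β x₀) v = 0 → Q' v = 0 → v = 0 := by
    rintro ⟨v, s⟩ hv hQv
    rw [characteristicOperator_apply, sub_eq_zero] at hv
    obtain rfl : v = 0 := hinj v s hv congr($hQv.1)
    exact Prod.ext rfl (by simpa [hβ₀, eq_comm] using hv)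
  have hdim' : ∀ᶠ x in 𝓝 x₀, Module.finrank ℝ (LinearMap.range Q'.toLinearMap) ≤
      Module.finrank ℝ (LinearMap.ker (characteristicOperator (ω x) (β x)).toLinearMap) := by
    filter_upwards [hfinrank, hω.eventually_finrank_ker_eq] with x hx hker
    rw [hx, hker, ← hfinrank.self_of_nhds]
    exact (finrank_range_prodMap_zero_le Q).trans hdim
  obtain ⟨Ξ', hΞ', hlift⟩ := exists_smoothNear_kernel_lift
    (smoothNear_characteristicOperator hω.smooth hβ.smooth) (fun v => Prod.ext (hQ v.1) rfl)
    hinj' hdim'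
  have hΞ'inl := hΞ'.clm_comp ((ContinuousLinearMap.compL ℝ E (E × ℝ) (E × ℝ)).flip (.inl ℝ E ℝ))
  refine ⟨fun x => .fst ℝ E ℝ ∘L Ξ' x ∘L .inl ℝ E ℝ, fun x => .snd ℝ E ℝ ∘L Ξ' x ∘L .inl ℝ E ℝ,
    ⟨hΞ'inl.clm_comp (.compL ℝ E (E × ℝ) E (.fst ℝ E ℝ)), ?_, ?_⟩,
    hΞ'inl.clm_comp (.compL ℝ E (E × ℝ) ℝ (.snd ℝ E ℝ)), ?_, ?_, ?_⟩
  all_goals filter_upwards [hlift] with x ⟨hproj, happly, hker, heq⟩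
  · exact fun v => congr($(hproj (v, 0)).1)
  · exact fun v => congr($(happly (v, 0)).1)
  · exact fun v => congr($(happly (v, 0)).2)
  · exact fun v => sub_eq_zero.1 (hker (v, 0))
  · intro v s hv hQv
    exact congr($(heq (v, s) (by rw [characteristicOperator_apply, hv, sub_self])
      (Prod.ext hQv rfl)).1)

theorem IsCharacteristicLift.exists_isConjugateFunction (hΞ : IsCharacteristicLift ω β Q Ξ g x₀)
    (hω : IsPresymplectic ω k x₀) (hβ : IsScaledPrimitive ω c β x₀) (hβ₀ : β x₀ ≠ 0) :
    ∃ f, IsConjugateFunction ω β f x₀ ∧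
      ∀ (W : E →L[ℝ] E) (w l : ℝ), (∀ v, Q (W v) = W (Q v)) → W x₀ = 0 →
        HomogeneousTwoForm W w ω x₀ → HomogeneousOneForm W l β x₀ →
        HomogeneousFunction W (w - l) f x₀ := by
  obtain ⟨f, hf, hfg, hslice⟩ := hΞ.toIsLift.exists_fderiv_apply_eq hΞ.smooth_coeff hΞ.coeff_proj
    (hΞ.isClosedAlong_self hω hβ) (hΞ.isClosedAlong_coeff hω hβ hβ₀) (.const 0 x₀)
  refine ⟨f, ⟨hf, ?_⟩, fun W w l hQW hWx₀ hωW hβW => ?_⟩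
  · filter_upwards [hfg, hΞ.eventually_apply_eq_self, hΞ.form_apply,
      hβ.smooth.continuousAt.eventually_ne hβ₀] with x hfg hself hform hβx v s hv
    have hgs := hform v
    rw [hself v s hv, hv, smul_left_inj hβx] at hgs
    rw [hgs, ← hfg, hself v s hv]
  · exact hΞ.toIsLift.homogeneousFunction hΞ.smooth_coeff
      (hΞ.invariantLift hω.smooth hβ.smooth hωW hβW hQW)
      (hΞ.homogeneousOneForm_coeff hω.smooth hβ.smooth hωW hβW hQW hβ₀) hQW hWx₀ hf hfg
      (.const 0 x₀) (by simp [HomogeneousFunction]) hslice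

theorem IsCharacteristicLift.exists_extension (hΞ : IsCharacteristicLift ω 0 Q Ξ 0 x₀)
    (hω : IsPresymplectic ω k x₀) (hf₀ : SmoothNear f₀ x₀) :
    ∃ f, SmoothNear f x₀ ∧ (∀ᶠ x in 𝓝 x₀, ∀ v, ω x v = 0 → fderiv ℝ f x v = 0) ∧
      (∀ᶠ x in 𝓝 x₀, Q (x - x₀) = 0 → f x = f₀ x) ∧
      ∀ (W : E →L[ℝ] E) (w μ : ℝ), (∀ v, Q (W v) = W (Q v)) → W x₀ = 0 →
        HomogeneousTwoForm W w ω x₀ → HomogeneousFunction W μ f₀ x₀ →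
        HomogeneousFunction W μ f x₀ := by
  have hzero := isScaledPrimitive_zero ω x₀
  obtain ⟨f, hf, hfg, hslice⟩ := hΞ.toIsLift.exists_fderiv_apply_eq hΞ.smooth_coeff hΞ.coeff_proj
    (hΞ.isClosedAlong_self hω hzero) (by simp [IsClosedAlong]) hf₀
  refine ⟨f, hf, ?_, hslice, fun W w μ hQW hWx₀ hωW hf₀W => ?_⟩
  · filter_upwards [hfg, hΞ.eventually_apply_eq_self] with x hfg hself v hv
    rw [← hself v 0 (by rw [hv, zero_smul]), hfg]
    rfl
  · exact hΞ.toIsLift.homogeneousFunction hΞ.smooth_coeff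
      (hΞ.invariantLift hω.smooth hzero.smooth hωW (homogeneousOneForm_zero W 0 x₀) hQW)
      (homogeneousOneForm_zero W μ x₀) hQW hWx₀ hf hfg hf₀ hf₀W hslice

end AdaptedFunctions

section Coordinates

lemma fderiv_eval {ι : Type*} (i : ι) (x : ι → ℝ) :
    fderiv ℝ (fun y : ι → ℝ => y i) x = .proj i :=
  (ContinuousLinearMap.proj (R := ℝ) (φ := fun _ : ι => ℝ) i).fderiv

variable {ι : Type*} [Fintype ι] {ω : (ι → ℝ) → (ι → ℝ) →L[ℝ] (ι → ℝ) →L[ℝ] ℝ}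
  {β : (ι → ℝ) → (ι → ℝ) →L[ℝ] ℝ} {c : ℝ} {k : ℕ} {x₀ : ι → ℝ}

/-- The diagonal operator `x ↦ (w i * x i)ᵢ`. It is the weight vector field for a family `w` of
weights, and a coordinate projection when `w` only takes the values `0` and `1`. -/
noncomputable abbrev diagonal (w : ι → ℝ) : (ι → ℝ) →L[ℝ] ι → ℝ :=
  ContinuousLinearMap.mul ℝ (ι → ℝ) w

lemma diagonal_comm (s w x : ι → ℝ) : diagonal s (diagonal w x) = diagonal w (diagonal s x) :=
  mul_left_comm s w x

lemma diagonal_idem {s : ι → ℝ} (hs : s * s = s) (x : ι → ℝ) :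
    diagonal s (diagonal s x) = diagonal s x := by
  simp [← mul_assoc, hs]

theorem IsScaledPrimitive.exists_isConjugateFunction (hβ : IsScaledPrimitive ω c β x₀)
    (hω : IsPresymplectic ω k x₀) (hβ₀ : β x₀ ≠ 0) :
    ∃ f, IsConjugateFunction ω β f x₀ ∧
      ∀ (w : ι → ℝ) (μ l : ℝ), diagonal w x₀ = 0 → HomogeneousTwoForm (diagonal w) μ ω x₀ →
        HomogeneousOneForm (diagonal w) l β x₀ →
        HomogeneousFunction (diagonal w) (μ - l) f x₀ := by
  obtain ⟨s, hs, hinj, hdim⟩ := exists_coordinate_projection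
    ((LinearMap.ker (characteristicOperator (ω x₀) (β x₀)).toLinearMap).map
      (LinearMap.fst ℝ (ι → ℝ) ℝ))
  obtain ⟨Ξ, g, hΞ⟩ := hβ.exists_isCharacteristicLift (Q := diagonal s) hω hβ₀ (diagonal_idem hs)
    (fun v t hv => hinj v ⟨(v, t), sub_eq_zero.2 hv, rfl⟩)
    (hdim.trans (Submodule.finrank_map_le _ _))
  obtain ⟨f, hf, hfW⟩ := hΞ.exists_isConjugateFunction hω hβ hβ₀
  exact ⟨f, hf, fun w μ l => hfW (diagonal w) μ l (diagonal_comm s w)⟩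

theorem IsPresymplectic.exists_homogeneous_firstIntegral (hω : IsPresymplectic ω k x₀)
    (hk : k ≠ 0) :
    ∃ i q, SmoothNear q x₀ ∧ (∀ᶠ x in 𝓝 x₀, ∀ v, ω x v = 0 → fderiv ℝ q x v = 0) ∧
      fderiv ℝ q x₀ ≠ 0 ∧ ∀ (w : ι → ℝ) (μ : ℝ), diagonal w x₀ = 0 →
        HomogeneousTwoForm (diagonal w) μ ω x₀ → HomogeneousFunction (diagonal w) (w i) q x₀ := by
  classical
  obtain ⟨s, hs, hinj, hdim⟩ := exists_coordinate_projection (LinearMap.ker (ω x₀).toLinearMap)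
  obtain ⟨Ξ, hΞ⟩ := hω.exists_isCharacteristicLift_zero (diagonal_idem hs) hinj hdim
  obtain ⟨i, hi⟩ : ∃ i, s i = 0 := by
    by_contra! hne
    have hs1 : s = 1 := funext fun i => by simpa [hne i] using congrFun hs i
    have hrank := LinearMap.finrank_range_add_finrank_ker (ω x₀).toLinearMap
    rw [hω.rank.self_of_nhds] at hrank
    rw [hs1, LinearMap.mulLeft_one, LinearMap.range_id, finrank_top] at hdim
    omega
  have hcoord : SmoothNear (fun x : ι → ℝ => x i) x₀ :=
    .clm (.proj (R := ℝ) (φ := fun _ : ι => ℝ) i) x₀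
  obtain ⟨q, hq, hqω, hslice, hqW⟩ := hΞ.exists_extension hω hcoord
  refine ⟨i, q, hq, hqω, fun hq₀ => ?_, fun w μ hw hωW => hqW (diagonal w) μ (w i)
    (diagonal_comm s w) hw hωW (.of_forall fun x => by simp [fderiv_eval])⟩
  have h := (eventually_fderiv_eq_on_slice (diagonal s) hq hcoord hslice).self_of_nhds (by simp)
    (Pi.single i 1) (by rw [ContinuousLinearMap.mul_apply', ← Pi.single_mul_right]; simp [hi])
  simp [hq₀, fderiv_eval] at h

end Coordinates

section Reduction

variable {E : Type*} [NormedAddCommGroup E] [NormedSpace ℝ E]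
  {ω : E → E →L[ℝ] E →L[ℝ] ℝ} {β : E → E →L[ℝ] ℝ} {p : E → ℝ} {c : ℝ} {x₀ : E}

/-- What remains of `ω` after splitting off `dp ∧ β`. The exponential factor makes the remainder
closed when `dβ = c ω`. -/
noncomputable def reducedForm (ω : E → E →L[ℝ] E →L[ℝ] ℝ) (β : E → E →L[ℝ] ℝ) (p : E → ℝ) (c : ℝ)
    (x : E) : E →L[ℝ] E →L[ℝ] ℝ :=
  Real.exp (-c * p x) • (ω x - wedge (fderiv ℝ p x) (β x))

lemma reducedForm_apply_apply (ω : E → E →L[ℝ] E →L[ℝ] ℝ) (β : E → E →L[ℝ] ℝ) (p : E → ℝ) (c : ℝ)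
    (x u v : E) : reducedForm ω β p c x u v =
      Real.exp (-c * p x) * (ω x u v - (fderiv ℝ p x u * β x v - fderiv ℝ p x v * β x u)) := by
  simp only [reducedForm, smul_apply, sub_apply, wedge_apply_apply, smul_eq_mul]

lemma eq_wedge_add_exp_smul_reducedForm (ω : E → E →L[ℝ] E →L[ℝ] ℝ) (β : E → E →L[ℝ] ℝ)
    (p : E → ℝ) (c : ℝ) (x : E) :
    ω x = wedge (fderiv ℝ p x) (β x) + Real.exp (c * p x) • reducedForm ω β p c x := by
  rw [reducedForm, smul_smul, ← Real.exp_add, neg_mul, add_neg_cancel, Real.exp_zero, one_smul]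
  module

lemma smoothNear_reducedForm (hω : SmoothNear ω x₀) (hβ : SmoothNear β x₀) (hp : SmoothNear p x₀)
    (c : ℝ) : SmoothNear (reducedForm ω β p c) x₀ := by
  have hwedge : SmoothNear (fun x => wedge (fderiv ℝ p x) (β x)) x₀ := by
    filter_upwards [hp.fderiv, hβ] with x hpx hβx
    exact (hpx.smulRight hβx).sub (hβx.smulRight hpx)
  exact ((SmoothNear.const (-c) x₀).smul hp).exp.smul (hω.sub hwedge)

lemma eventually_fderiv_reducedForm (hω : SmoothNear ω x₀) (hβ : SmoothNear β x₀)
    (hp : SmoothNear p x₀) (c : ℝ) :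
    ∀ᶠ x in 𝓝 x₀, ∀ z u v, fderiv ℝ (reducedForm ω β p c) x z u v =
      Real.exp (-c * p x) * (-c * fderiv ℝ p x z *
        (ω x u v - (fderiv ℝ p x u * β x v - fderiv ℝ p x v * β x u)) +
        (fderiv ℝ ω x z u v -
          (fderiv ℝ (fderiv ℝ p) x z u * β x v + fderiv ℝ p x u * fderiv ℝ β x z v -
            fderiv ℝ (fderiv ℝ p) x z v * β x u - fderiv ℝ p x v * fderiv ℝ β x z u))) := by
  filter_upwards [hω.eventually_differentiableAt, hβ.eventually_differentiableAt,
    hp.eventually_differentiableAt, hp.fderiv.eventually_differentiableAt,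
    (smoothNear_reducedForm hω hβ hp c).eventually_differentiableAt]
    with x hdω hdβ hdp hdp' hdred z u v
  have hdωu := hdω.clm_apply (differentiableAt_const u)
  have hdωuv := hdωu.clm_apply (differentiableAt_const v)
  have hdβ_apply (u : E) := hdβ.clm_apply (differentiableAt_const u)
  have hdp'_apply (u : E) := hdp'.clm_apply (differentiableAt_const u)
  rw [← fderiv_clm_apply_const hdred, ← fderiv_clm_apply_const
    (hdred.clm_apply (differentiableAt_const u))]
  simp only [reducedForm_apply_apply]
  have hderiv := (hdp.hasFDerivAt.const_mul (-c)).exp.mul (hdωuv.hasFDerivAt.sub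
    (((hdp'_apply u).hasFDerivAt.mul (hdβ_apply v).hasFDerivAt).sub
      ((hdp'_apply v).hasFDerivAt.mul (hdβ_apply u).hasFDerivAt)))
  refine congr($(hderiv.fderiv) z).trans ?_
  simp only [add_apply, sub_apply, smul_apply, smul_eq_mul, Pi.sub_apply, Pi.mul_apply,
    fderiv_clm_apply_const hdωu,
    fderiv_clm_apply_const hdω, fderiv_clm_apply_const hdβ, fderiv_clm_apply_const hdp']
  ring

lemma IsConjugateFunction.eventually_finrank_reducedForm [FiniteDimensional ℝ E] {k : ℕ}
    (hp : IsConjugateFunction ω β p x₀) (hω : IsPresymplectic ω (k + 2) x₀)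
    (hβ : IsScaledPrimitive ω c β x₀) :
    ∀ᶠ x in 𝓝 x₀,
      Module.finrank ℝ (LinearMap.range (reducedForm ω β p c x).toLinearMap) = k := by
  filter_upwards [hω.alternating, hω.rank, hβ.apply_ker, hp.fderiv_apply] with x halt hrank hker hpx
  obtain ⟨X, hX⟩ := exists_apply_eq_of_ker_le halt hker
  obtain ⟨Y, hY⟩ := exists_apply_eq_of_ker_le halt (β := fderiv ℝ p x)
    fun v hv => hpx v 0 (by rw [hv, zero_smul])
  have hsub := finrank_range_sub_wedge halt hX hY (hpx X 1 (by rw [hX, one_smul]))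
  rw [reducedForm, ContinuousLinearMap.toLinearMap_smul,
    LinearMap.range_smul _ _ (Real.exp_ne_zero _)]
  omega

theorem IsConjugateFunction.isPresymplectic_reducedForm [FiniteDimensional ℝ E] {k : ℕ}
    (hp : IsConjugateFunction ω β p x₀) (hω : IsPresymplectic ω (k + 2) x₀)
    (hβ : IsScaledPrimitive ω c β x₀) : IsPresymplectic (reducedForm ω β p c) k x₀ := by
  refine ⟨smoothNear_reducedForm hω.smooth hβ.smooth hp.smooth c, ?_, ?_,
    hp.eventually_finrank_reducedForm hω hβ⟩
  · filter_upwards [hω.alternating] with x halt u v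
    rw [reducedForm_apply_apply, reducedForm_apply_apply, halt u v]
    ring
  · filter_upwards [hω.closed, hβ.exteriorDeriv, hp.smooth.eventually_fderiv_fderiv_comm,
      eventually_fderiv_reducedForm hω.smooth hβ.smooth hp.smooth c]
      with x hclosed hdβ hcomm hred u v z
    rw [hred, hred, hred, hcomm v u, hcomm z u, hcomm z v]
    linear_combination Real.exp (-c * p x) * (hclosed u v z + fderiv ℝ p x z * hdβ u v +
      fderiv ℝ p x u * hdβ v z + fderiv ℝ p x v * hdβ z u)

lemma homogeneousTwoForm_reducedForm_zero {W : E →L[ℝ] E} {μ l : ℝ} (hω : SmoothNear ω x₀)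
    (hβ : SmoothNear β x₀) (hp : SmoothNear p x₀) (hωW : HomogeneousTwoForm W μ ω x₀)
    (hβW : HomogeneousOneForm W l β x₀) (hpW : HomogeneousFunction W (μ - l) p x₀) :
    HomogeneousTwoForm W μ (reducedForm ω β p 0) x₀ := by
  filter_upwards [hωW, hβW, hpW.homogeneousOneForm_fderiv hp,
    eventually_fderiv_reducedForm hω hβ hp 0] with x hωW hβW hdpW hred u v
  simp only [hred, reducedForm_apply_apply, neg_zero, zero_mul, Real.exp_zero]
  linear_combination hωW u v - β x v * hdpW u - fderiv ℝ p x u * hβW v + β x u * hdpW v +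
    fderiv ℝ p x v * hβW u

end Reduction

section DarbouxCoordinates

variable {E : Type*} [NormedAddCommGroup E] [NormedSpace ℝ E] {W : E →L[ℝ] E}
  {ω : E → E →L[ℝ] E →L[ℝ] ℝ} {r : ℕ} {p q : Fin r → E → ℝ} {x₀ : E}

/-- The function `f` is smooth, and homogeneous of some weight, near `x₀`. -/
def IsHomogeneousCoordinate (W : E →L[ℝ] E) (f : E → ℝ) (x₀ : E) : Prop :=
  SmoothNear f x₀ ∧ ∃ μ, HomogeneousFunction W μ f x₀

/-- Homogeneous functions `p` and `q` with `ω = ∑ dpᵢ ∧ dqᵢ` near `x₀`. -/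
structure IsDarbouxSystem (W : E →L[ℝ] E) (ω : E → E →L[ℝ] E →L[ℝ] ℝ) (p q : Fin r → E → ℝ)
    (x₀ : E) : Prop where
  momentum : ∀ i, IsHomogeneousCoordinate W (p i) x₀
  position : ∀ i, IsHomogeneousCoordinate W (q i) x₀
  form_eq : ∀ᶠ x in 𝓝 x₀, ω x = ∑ i, wedge (fderiv ℝ (p i) x) (fderiv ℝ (q i) x)

lemma isDarbouxSystem_zero (W : E →L[ℝ] E) [FiniteDimensional ℝ E] (hω : IsPresymplectic ω 0 x₀) :
    IsDarbouxSystem W ω Fin.elim0 Fin.elim0 x₀ := by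
  refine ⟨fun i => i.elim0, fun i => i.elim0, ?_⟩
  filter_upwards [hω.rank] with x hrank
  rw [Submodule.finrank_eq_zero, LinearMap.range_eq_bot] at hrank
  exact ContinuousLinearMap.coe_injective (by simpa using hrank)

lemma IsDarbouxSystem.cons {ω' : E → E →L[ℝ] E →L[ℝ] ℝ} {p₀ q₀ : E → ℝ}
    (h : IsDarbouxSystem W ω' p q x₀) (hp₀ : IsHomogeneousCoordinate W p₀ x₀)
    (hq₀ : IsHomogeneousCoordinate W q₀ x₀)
    (hω : ∀ᶠ x in 𝓝 x₀, ω x = wedge (fderiv ℝ p₀ x) (fderiv ℝ q₀ x) + ω' x) :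
    IsDarbouxSystem W ω (Fin.cons p₀ p : Fin (r + 1) → E → ℝ) (Fin.cons q₀ q) x₀ := by
  refine ⟨Fin.cases hp₀ h.momentum, Fin.cases hq₀ h.position, ?_⟩
  filter_upwards [hω, h.form_eq] with x hω hω'
  simp only [hω, hω', Fin.sum_univ_succ, Fin.cons_zero, Fin.cons_succ]

lemma IsDarbouxSystem.linearIndependent [FiniteDimensional ℝ E] (h : IsDarbouxSystem W ω p q x₀)
    (hω : IsPresymplectic ω (2 * r) x₀) :
    ∀ᶠ x in 𝓝 x₀,
      LinearIndependent ℝ (Sum.elim (fun i => fderiv ℝ (q i) x) fun i => fderiv ℝ (p i) x) := by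
  filter_upwards [h.form_eq, hω.rank] with x hform hrank
  exact linearIndependent_of_finrank_range_sum_wedge (by rw [← hform, hrank, Fintype.card_fin])

lemma IsDarbouxSystem.homogeneousFunction_zero [FiniteDimensional ℝ E] {W' : E →L[ℝ] E}
    (h : IsDarbouxSystem W' ω p q x₀) (hω : IsPresymplectic ω (2 * r) x₀)
    (hker : ∀ᶠ x in 𝓝 x₀, ω x (W x) = 0) (i : Fin r) :
    HomogeneousFunction W 0 (p i) x₀ ∧ HomogeneousFunction W 0 (q i) x₀ := by
  have hzero : ∀ᶠ x in 𝓝 x₀, fderiv ℝ (p i) x (W x) = 0 ∧ fderiv ℝ (q i) x (W x) = 0 := by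
    filter_upwards [h.form_eq, h.linearIndependent hω, hker] with x hform hpq hker
    exact apply_eq_zero_of_sum_wedge_apply_eq_zero hpq (by rw [← hform, hker]) i
  exact ⟨hzero.mono fun x hx => by rw [hx.1, zero_mul],
    hzero.mono fun x hx => by rw [hx.2, zero_mul]⟩

lemma exists_weights_of_isHomogeneousCoordinate {κ : Type*} [Finite κ] {f : κ → E → ℝ}
    (hf : ∀ i, IsHomogeneousCoordinate W (f i) x₀) :
    ∃ μ : κ → ℝ, ∀ᶠ x in 𝓝 x₀, ∀ i, ContDiffAt ℝ (⊤ : ℕ∞) (f i) x ∧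
      fderiv ℝ (f i) x (W x) = μ i * f i x := by
  choose hsmooth μ hμ using hf
  exact ⟨μ, eventually_all.2 fun i => (hsmooth i).and (hμ i)⟩

end DarbouxCoordinates

section WeightFieldVanishes

variable {ι : Type*} [Fintype ι] {x₀ : ι → ℝ}

theorem IsPresymplectic.exists_isDarbouxSystem_of_diagonal_eq_zero {w : ι → ℝ} {μ : ℝ} {r : ℕ}
    {ω : (ι → ℝ) → (ι → ℝ) →L[ℝ] (ι → ℝ) →L[ℝ] ℝ} (hω : IsPresymplectic ω (2 * r) x₀)
    (hωW : HomogeneousTwoForm (diagonal w) μ ω x₀) (hw : diagonal w x₀ = 0) :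
    ∃ p q : Fin r → (ι → ℝ) → ℝ, IsDarbouxSystem (diagonal w) ω p q x₀ := by
  induction r generalizing ω with
  | zero => exact ⟨_, _, isDarbouxSystem_zero _ hω⟩
  | succ r ih =>
    obtain ⟨i, q, hq, hqω, hq₀, hqW⟩ := hω.exists_homogeneous_firstIntegral (by simp)
    have hqW := hqW w μ hw hωW
    have hdq : IsScaledPrimitive ω 0 (fderiv ℝ q) x₀ := by
      refine ⟨hq.fderiv, ?_, hqω⟩
      filter_upwards [hq.eventually_fderiv_fderiv_comm] with x hcomm u v
      rw [hcomm, sub_self, zero_mul]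
    have hdqW := hqW.homogeneousOneForm_fderiv hq
    obtain ⟨p, hp, hpW⟩ := hdq.exists_isConjugateFunction hω hq₀
    have hpW := hpW w μ (w i) hw hωW hdqW
    obtain ⟨P, Q, hPQ⟩ := ih (hp.isPresymplectic_reducedForm hω hdq)
      (homogeneousTwoForm_reducedForm_zero hω.smooth hq.fderiv hp.smooth hωW hdqW hpW)
    refine ⟨_, _, hPQ.cons ⟨hp.smooth, _, hpW⟩ ⟨hq, _, hqW⟩ (.of_forall fun x => ?_)⟩
    simpa using eq_wedge_add_exp_smul_reducedForm ω (fderiv ℝ q) p 0 x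

end WeightFieldVanishes

section WeightFieldTransverse

variable {E : Type*} [NormedAddCommGroup E] [NormedSpace ℝ E] {W : E →L[ℝ] E}
  {ω : E → E →L[ℝ] E →L[ℝ] ℝ} {β : E → E →L[ℝ] ℝ} {T f g : E → ℝ} {c μ : ℝ} {k r : ℕ}
  {P Q : Fin r → E → ℝ} {x₀ : E}

theorem IsPresymplectic.isScaledPrimitive_contraction (hω : IsPresymplectic ω k x₀)
    (hωW : HomogeneousTwoForm W μ ω x₀) : IsScaledPrimitive ω μ (fun x => ω x (W x)) x₀ := by
  refine ⟨hω.smooth.clm_apply (.clm W x₀), ?_, ?_⟩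
  · filter_upwards [hω.smooth.eventually_differentiableAt, hω.alternating, hω.closed, hωW,
      hω.eventually_fderiv_alternating] with x hdω halt hclosed hωW hdalt u v
    simp only [fderiv_clm_apply_apply hdω W.differentiableAt, W.fderiv, add_apply]
    linear_combination hclosed u (W x) v + hωW u v - hdalt v u (W x) - hdalt (W x) v u -
      halt (W v) u
  · filter_upwards [hω.alternating] with x halt v hv
    rw [halt, hv, zero_apply, neg_zero]

lemma reducedForm_contraction_apply {x : E} (halt : ∀ u v, ω x u v = -ω x v u)
    (hT : fderiv ℝ T x (W x) = 1) : reducedForm ω (fun y => ω y (W y)) T c x (W x) = 0 := by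
  rw [reducedForm, smul_apply, sub_apply, wedge_apply, hT, alternating_apply_self halt]
  module

lemma exists_fderiv_eq_of_symmetric [FiniteDimensional ℝ E] (hβ : SmoothNear β x₀)
    (hsymm : ∀ᶠ x in 𝓝 x₀, ∀ u v, fderiv ℝ β x u v = fderiv ℝ β x v u) :
    ∃ f, SmoothNear f x₀ ∧ ∀ᶠ x in 𝓝 x₀, fderiv ℝ f x = β x := by
  have hid : IsLift (.id ℝ E) (fun _ => .id ℝ E) x₀ := ⟨.const _ x₀, by simp, by simp⟩
  obtain ⟨f, hf, hfβ, -⟩ := hid.exists_fderiv_apply_eq hβ (by simp) (by simp [IsClosedAlong])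
    hsymm (.const 0 x₀)
  exact ⟨f, hf, hfβ.mono fun x hx => ContinuousLinearMap.ext hx⟩

lemma eventually_fderiv_exp_const_mul (hT : SmoothNear T x₀) (c : ℝ) :
    ∀ᶠ x in 𝓝 x₀, fderiv ℝ (fun y => Real.exp (c * T y)) x =
      (c * Real.exp (c * T x)) • fderiv ℝ T x := by
  filter_upwards [hT.eventually_differentiableAt] with x hdT
  rw [fderiv_exp (hdT.const_mul c), fderiv_const_mul hdT, smul_smul, mul_comm]

lemma IsHomogeneousCoordinate.mul (hf : IsHomogeneousCoordinate W f x₀)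
    (hg : IsHomogeneousCoordinate W g x₀) : IsHomogeneousCoordinate W (fun x => f x * g x) x₀ := by
  obtain ⟨hf, μ, hfW⟩ := hf
  obtain ⟨hg, l, hgW⟩ := hg
  refine ⟨hf.smul hg, μ + l, ?_⟩
  filter_upwards [hf.eventually_differentiableAt, hg.eventually_differentiableAt, hfW, hgW]
    with x hdf hdg hfW hgW
  rw [fderiv_fun_mul hdf hdg, add_apply, smul_apply, smul_apply, hfW, hgW, smul_eq_mul,
    smul_eq_mul]
  ring

lemma isHomogeneousCoordinate_exp_const_mul (hT : SmoothNear T x₀)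
    (hTW : ∀ᶠ x in 𝓝 x₀, fderiv ℝ T x (W x) = 1) (c : ℝ) :
    IsHomogeneousCoordinate W (fun x => Real.exp (c * T x)) x₀ := by
  refine ⟨((SmoothNear.const c x₀).smul hT).exp, c, ?_⟩
  filter_upwards [eventually_fderiv_exp_const_mul hT c, hTW] with x hexp hTW
  rw [hexp, smul_apply, hTW, smul_eq_mul, mul_one]

theorem IsDarbouxSystem.exists_of_reducedForm_zero [FiniteDimensional ℝ E]
    (hPQ : IsDarbouxSystem W (reducedForm ω β T 0) P Q x₀) (hβ : IsScaledPrimitive ω 0 β x₀)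
    (hT : SmoothNear T x₀) (hTW : ∀ᶠ x in 𝓝 x₀, fderiv ℝ T x (W x) = 1)
    (hβW : ∀ᶠ x in 𝓝 x₀, β x (W x) = 0) :
    ∃ p q : Fin (r + 1) → E → ℝ, IsDarbouxSystem W ω p q x₀ := by
  obtain ⟨H, hH, hdH⟩ := exists_fderiv_eq_of_symmetric hβ.smooth
    (hβ.exteriorDeriv.mono fun x hx u v => sub_eq_zero.1 ((hx u v).trans (zero_mul _)))
  have hHW : IsHomogeneousCoordinate W H x₀ := by
    refine ⟨hH, 0, ?_⟩
    filter_upwards [hdH, hβW] with x hdH hβW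
    rw [hdH, hβW, zero_mul]
  have hexp := isHomogeneousCoordinate_exp_const_mul hT hTW
  refine ⟨_, _, hPQ.cons (hexp 1) (hHW.mul (hexp (-1))) ?_⟩
  filter_upwards [eventually_fderiv_exp_const_mul hT 1, eventually_fderiv_exp_const_mul hT (-1),
    hdH, hH.eventually_differentiableAt, (hexp (-1)).1.eventually_differentiableAt]
    with x hexp₁ hexp₂ hdHx hdiffH hdiff
  have hone : Real.exp (1 * T x) * Real.exp (-1 * T x) = 1 := by simp [← Real.exp_add]
  have hwedge : wedge (fderiv ℝ T x) (β x) = wedge (fderiv ℝ (fun y => Real.exp (1 * T y)) x)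
      (fderiv ℝ (fun y => H y * Real.exp (-1 * T y)) x) := by
    rw [fderiv_fun_mul hdiffH hdiff, hexp₁, hexp₂, hdHx]
    refine ContinuousLinearMap.ext fun u => ContinuousLinearMap.ext fun v => ?_
    simp only [wedge_apply_apply, add_apply, smul_apply, smul_eq_mul]
    linear_combination -(fderiv ℝ T x u * β x v - fderiv ℝ T x v * β x u) * hone
  rw [← hwedge]
  simpa using eq_wedge_add_exp_smul_reducedForm ω β T 0 x

lemma fderiv_smul_apply_apply {x : E} (hf : DifferentiableAt ℝ f x) (hβ : DifferentiableAt ℝ β x)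
    (u v : E) : fderiv ℝ (fun y => f y • β y) x u v =
      fderiv ℝ f x u * β x v + f x * fderiv ℝ β x u v := by
  rw [fderiv_fun_smul hf hβ, add_apply, smul_apply, ContinuousLinearMap.smulRight_apply, add_apply,
    smul_apply, smul_apply, smul_eq_mul, smul_eq_mul, add_comm]

lemma IsScaledPrimitive.eventually_exteriorDeriv_exp_smul (hβ : IsScaledPrimitive ω c β x₀)
    (hT : SmoothNear T x₀) :
    ∀ᶠ x in 𝓝 x₀, ∀ u v, fderiv ℝ (fun y => Real.exp (-c * T y) • β y) x u v -
      fderiv ℝ (fun y => Real.exp (-c * T y) • β y) x v u = c * reducedForm ω β T c x u v := by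
  filter_upwards [eventually_fderiv_exp_const_mul hT (-c), hT.eventually_differentiableAt,
    hβ.smooth.eventually_differentiableAt, hβ.exteriorDeriv] with x hexp hdT hdβ hext u v
  rw [fderiv_smul_apply_apply (hdT.const_mul (-c)).exp hdβ,
    fderiv_smul_apply_apply (hdT.const_mul (-c)).exp hdβ, hexp, reducedForm_apply_apply, smul_apply,
    smul_apply, smul_eq_mul, smul_eq_mul]
  linear_combination Real.exp (-c * T x) * hext u v

lemma eventually_exteriorDeriv_sum_smul_fderiv (hP : ∀ i, SmoothNear (P i) x₀)
    (hQ : ∀ i, SmoothNear (Q i) x₀) :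
    ∀ᶠ x in 𝓝 x₀, ∀ u v, fderiv ℝ (fun y => ∑ i, P i y • fderiv ℝ (Q i) y) x u v -
      fderiv ℝ (fun y => ∑ i, P i y • fderiv ℝ (Q i) y) x v u =
        (∑ i, wedge (fderiv ℝ (P i) x) (fderiv ℝ (Q i) x)) u v := by
  filter_upwards [eventually_all.2 fun i => (hP i).eventually_differentiableAt,
    eventually_all.2 fun i => (hQ i).fderiv.eventually_differentiableAt,
    eventually_all.2 fun i => (hQ i).eventually_fderiv_fderiv_comm] with x hdP hdQ hcomm u v
  rw [fderiv_fun_sum fun i _ => (hdP i).fun_smul (hdQ i)]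
  simp only [sum_apply, fderiv_smul_apply_apply (hdP _) (hdQ _), wedge_apply_apply,
    ← Finset.sum_sub_distrib]
  refine Finset.sum_congr rfl fun i _ => ?_
  rw [hcomm i u v]
  ring

lemma IsDarbouxSystem.exists_fderiv_eq [FiniteDimensional ℝ E]
    (hPQ : IsDarbouxSystem W (reducedForm ω β T c) P Q x₀) (hβ : IsScaledPrimitive ω c β x₀)
    (hT : SmoothNear T x₀) (hc : c ≠ 0) :
    ∃ S, SmoothNear S x₀ ∧ ∀ᶠ x in 𝓝 x₀, fderiv ℝ S x =
      c⁻¹ • Real.exp (-c * T x) • β x - ∑ i, P i x • fderiv ℝ (Q i) x := by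
  have hexpβ : SmoothNear (fun x => Real.exp (-c * T x) • β x) x₀ :=
    ((SmoothNear.const (-c) x₀).smul hT).exp.smul hβ.smooth
  have hsum : SmoothNear (fun x => ∑ i, P i x • fderiv ℝ (Q i) x) x₀ :=
    .sum fun i => (hPQ.momentum i).1.smul (hPQ.position i).1.fderiv
  refine exists_fderiv_eq_of_symmetric (((SmoothNear.const c⁻¹ x₀).smul hexpβ).sub hsum) ?_
  filter_upwards [hexpβ.eventually_differentiableAt, hsum.eventually_differentiableAt,
    hβ.eventually_exteriorDeriv_exp_smul hT, hPQ.form_eq, eventually_exteriorDeriv_sum_smul_fderiv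
      (fun i => (hPQ.momentum i).1) fun i => (hPQ.position i).1]
    with x hdexp hdsum hexp hform hext u v
  rw [fderiv_fun_sub (hdexp.fun_const_smul c⁻¹) hdsum, fderiv_fun_const_smul hdexp]
  simp only [sub_apply, smul_apply, smul_eq_mul]
  have hext := hext u v
  rw [← hform] at hext
  linear_combination c⁻¹ * hexp u v - hext + reducedForm ω β T c x u v * inv_mul_cancel₀ hc

lemma wedge_fderiv_mul {x : E} (hf : DifferentiableAt ℝ f x) (hg : DifferentiableAt ℝ g x)
    (α : E →L[ℝ] ℝ) : wedge (fderiv ℝ (fun y => f y * g y) x) α =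
      f x • wedge (fderiv ℝ g x) α + g x • wedge (fderiv ℝ f x) α := by
  rw [fderiv_fun_mul hf hg]
  refine ContinuousLinearMap.ext fun u => ContinuousLinearMap.ext fun v => ?_
  simp only [wedge_apply_apply, add_apply, smul_apply, smul_eq_mul]
  ring

theorem IsDarbouxSystem.exists_of_reducedForm_ne_zero [FiniteDimensional ℝ E]
    (hPQ : IsDarbouxSystem W (reducedForm ω β T c) P Q x₀) (hβ : IsScaledPrimitive ω c β x₀)
    (hT : SmoothNear T x₀) (hTW : ∀ᶠ x in 𝓝 x₀, fderiv ℝ T x (W x) = 1)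
    (hβW : ∀ᶠ x in 𝓝 x₀, β x (W x) = 0) (hQW : ∀ i, HomogeneousFunction W 0 (Q i) x₀)
    (hc : c ≠ 0) : ∃ p q : Fin (r + 1) → E → ℝ, IsDarbouxSystem W ω p q x₀ := by
  obtain ⟨S, hS, hdS⟩ := hPQ.exists_fderiv_eq hβ hT hc
  have hSW : IsHomogeneousCoordinate W S x₀ := by
    refine ⟨hS, 0, ?_⟩
    filter_upwards [hdS, hβW, eventually_all.2 hQW] with x hdS hβW hQW
    simp [hdS, hβW, hQW]
  have hexp := isHomogeneousCoordinate_exp_const_mul hT hTW c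
  refine ⟨_, _, IsDarbouxSystem.cons (ω' := fun x => ∑ i,
    wedge (fderiv ℝ (fun y => Real.exp (c * T y) * P i y) x) (fderiv ℝ (Q i) x))
    ⟨fun i => hexp.mul (hPQ.momentum i), hPQ.position, .of_forall fun _ => rfl⟩ hexp hSW ?_⟩
  filter_upwards [eventually_fderiv_exp_const_mul hT c, hdS, hPQ.form_eq,
    hexp.1.eventually_differentiableAt,
    eventually_all.2 fun i => (hPQ.momentum i).1.eventually_differentiableAt]
    with x hdexp hdS hform hdiff hdP
  have hone : Real.exp (c * T x) * Real.exp (-c * T x) = 1 := by simp [← Real.exp_add]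
  have hwedge : wedge (fderiv ℝ (fun y => Real.exp (c * T y)) x) (fderiv ℝ S x) =
      wedge (fderiv ℝ T x) (β x) -
        ∑ i, P i x • wedge (fderiv ℝ (fun y => Real.exp (c * T y)) x) (fderiv ℝ (Q i) x) := by
    refine ContinuousLinearMap.ext fun u => ContinuousLinearMap.ext fun v => ?_
    simp only [hdS, hdexp, wedge_apply_apply, sub_apply, smul_apply, sum_apply, smul_eq_mul,
      mul_sub, Finset.sum_sub_distrib, mul_left_comm (P _ x), ← Finset.mul_sum]
    linear_combination (fderiv ℝ T x u * β x v - fderiv ℝ T x v * β x u) *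
      (c * c⁻¹ * hone + mul_inv_cancel₀ hc)
  simp only [wedge_fderiv_mul hdiff (hdP _), Finset.sum_add_distrib, ← Finset.smul_sum, hwedge,
    ← hform]
  rw [eq_wedge_add_exp_smul_reducedForm ω β T c x]
  module

end WeightFieldTransverse

section WeightFieldTransverseDiagonal

variable {ι : Type*} [Fintype ι] {x₀ w : ι → ℝ} {μ : ℝ} {r : ℕ}
  {ω : (ι → ℝ) → (ι → ℝ) →L[ℝ] (ι → ℝ) →L[ℝ] ℝ}

lemma homogeneousTwoForm_diagonal_zero (ω : (ι → ℝ) → (ι → ℝ) →L[ℝ] (ι → ℝ) →L[ℝ] ℝ)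
    (x₀ : ι → ℝ) : HomogeneousTwoForm (diagonal 0) 0 ω x₀ := by
  simp [HomogeneousTwoForm]

theorem IsPresymplectic.exists_isDarbouxSystem_of_apply_diagonal_ne_zero
    (hω : IsPresymplectic ω (2 * (r + 1)) x₀) (hωW : HomogeneousTwoForm (diagonal w) μ ω x₀)
    (hw : ω x₀ (diagonal w x₀) ≠ 0) :
    ∃ p q : Fin (r + 1) → (ι → ℝ) → ℝ, IsDarbouxSystem (diagonal w) ω p q x₀ := by
  have hβ := hω.isScaledPrimitive_contraction hωW
  obtain ⟨T, hT, -⟩ := hβ.exists_isConjugateFunction hω hw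
  have hTW : ∀ᶠ x in 𝓝 x₀, fderiv ℝ T x (diagonal w x) = 1 :=
    hT.fderiv_apply.mono fun x hx => hx _ 1 (one_smul _ _).symm
  have hβW : ∀ᶠ x in 𝓝 x₀, ω x (diagonal w x) (diagonal w x) = 0 :=
    hω.alternating.mono fun x halt => alternating_apply_self halt _
  have hred := hT.isPresymplectic_reducedForm hω hβ
  obtain ⟨P, Q, hPQ₀⟩ := hred.exists_isDarbouxSystem_of_diagonal_eq_zero
    (homogeneousTwoForm_diagonal_zero _ x₀) (by simp)
  have hker : ∀ᶠ x in 𝓝 x₀,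
      reducedForm ω (fun y => ω y (diagonal w y)) T μ x (diagonal w x) = 0 := by
    filter_upwards [hω.alternating, hTW] with x halt hTW
    exact reducedForm_contraction_apply halt hTW
  have hPQW := hPQ₀.homogeneousFunction_zero hred hker
  have hPQ : IsDarbouxSystem (diagonal w) _ P Q x₀ :=
    ⟨fun i => ⟨(hPQ₀.momentum i).1, 0, (hPQW i).1⟩, fun i => ⟨(hPQ₀.position i).1, 0, (hPQW i).2⟩,
      hPQ₀.form_eq⟩
  rcases eq_or_ne μ 0 with rfl | hμ
  · exact hPQ.exists_of_reducedForm_zero hβ hT.smooth hTW hβW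
  · exact hPQ.exists_of_reducedForm_ne_zero hβ hT.smooth hTW hβW (fun i => (hPQW i).2) hμ

theorem IsPresymplectic.exists_isDarbouxSystem (hω : IsPresymplectic ω (2 * r) x₀)
    (hωW : HomogeneousTwoForm (diagonal w) μ ω x₀)
    (hw : diagonal w x₀ = 0 ∨ ω x₀ (diagonal w x₀) ≠ 0) :
    ∃ p q : Fin r → (ι → ℝ) → ℝ, IsDarbouxSystem (diagonal w) ω p q x₀ := by
  rcases hw with hw | hw
  · exact hω.exists_isDarbouxSystem_of_diagonal_eq_zero hωW hw
  · cases r with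
    | zero => exact ⟨_, _, isDarbouxSystem_zero _ hω⟩
    | succ r => exact hω.exists_isDarbouxSystem_of_apply_diagonal_ne_zero hωW hw

end WeightFieldTransverseDiagonal

section Completion

theorem exists_linearIndependent_sumElim_comp {K M ι κ : Type*}
    [Field K] [AddCommGroup M] [Module K M] [FiniteDimensional K M] [Fintype ι] {c : ι → M}
    (hc : LinearIndependent K c) {e : κ → M} (he : Submodule.span K (range e) = ⊤) {m : ℕ}
    (hm : m = Module.finrank K M - Fintype.card ι) :
    ∃ a : Fin m → κ, LinearIndependent K (Sum.elim c (e ∘ a)) := by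
  set N := Submodule.span K (range c)
  obtain ⟨κ', a, -, hspan, hli⟩ := exists_linearIndependent' K (N.mkQ ∘ e)
  have := hli.finite
  have := Fintype.ofFinite κ'
  have htop : Submodule.span K (range ((N.mkQ ∘ e) ∘ a)) = ⊤ := by
    rw [hspan, range_comp, Submodule.span_image, he, Submodule.map_top, Submodule.range_mkQ]
  have hcard : Fintype.card κ' = m := by
    rw [← finrank_span_eq_card hli, htop, finrank_top, Submodule.finrank_quotient,
      finrank_span_eq_card hc, hm]
  let σ : Fin m ≃ κ' := (Fintype.equivFinOfCardEq hcard).symm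
  have hcN : LinearIndependent K fun i => (⟨c i, Submodule.subset_span ⟨i, rfl⟩⟩ : N) :=
    .of_comp N.subtype hc
  exact ⟨a ∘ σ, hcN.sumElim_of_quotient (e ∘ a ∘ σ) (hli.comp σ σ.injective)⟩

lemma span_range_proj {ι : Type*} [Finite ι] :
    Submodule.span ℝ (range fun i : ι => (.proj i : (ι → ℝ) →L[ℝ] ℝ)) = ⊤ := by
  classical
  have := Fintype.ofFinite ι
  refine Submodule.eq_top_iff'.2 fun f => ?_
  have hf : f = ∑ i, f (Pi.single i 1) • (.proj i : (ι → ℝ) →L[ℝ] ℝ) := by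
    refine ContinuousLinearMap.ext fun v => ?_
    conv_lhs => rw [pi_eq_sum_univ' v]
    simp [mul_comm]
  rw [hf]
  exact Submodule.sum_mem _ fun i _ => Submodule.smul_mem _ _ (Submodule.subset_span ⟨i, rfl⟩)

variable {ι : Type*} [Fintype ι] {x₀ w : ι → ℝ} {r : ℕ}
  {ω : (ι → ℝ) → (ι → ℝ) →L[ℝ] (ι → ℝ) →L[ℝ] ℝ} {p q : Fin r → (ι → ℝ) → ℝ}

lemma finrank_continuousDual : Module.finrank ℝ ((ι → ℝ) →L[ℝ] ℝ) = Fintype.card ι := by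
  rw [← LinearMap.toContinuousLinearMap.finrank_eq, Module.finrank_linearMap_self,
    Module.finrank_fintype_fun_eq_card]

lemma isHomogeneousCoordinate_eval (w : ι → ℝ) (i : ι) (x₀ : ι → ℝ) :
    IsHomogeneousCoordinate (diagonal w) (fun x => x i) x₀ :=
  ⟨.clm (.proj (R := ℝ) (φ := fun _ : ι => ℝ) i) x₀, w i, .of_forall fun x => by simp [fderiv_eval]⟩

theorem IsDarbouxSystem.exists_coordinate_completion
    (h : IsDarbouxSystem (diagonal w) ω p q x₀) (hω : IsPresymplectic ω (2 * r) x₀) {m : ℕ}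
    (hm : m = Fintype.card ι - 2 * r) :
    ∃ z : Fin m → (ι → ℝ) → ℝ, (∀ a, IsHomogeneousCoordinate (diagonal w) (z a) x₀) ∧
      ∀ᶠ x in 𝓝 x₀, LinearIndependent ℝ (Sum.elim (fun i => fderiv ℝ (q i) x)
        (Sum.elim (fun i => fderiv ℝ (p i) x) fun a => fderiv ℝ (z a) x)) := by
  obtain ⟨a, ha⟩ := exists_linearIndependent_sumElim_comp (h.linearIndependent hω).self_of_nhds
    (e := fun i => fderiv ℝ (fun y : ι → ℝ => y i) x₀) (m := m)
    (by simpa only [fderiv_eval] using span_range_proj)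
    (by rw [finrank_continuousDual, Fintype.card_sum, Fintype.card_fin, hm, two_mul])
  have hz (b : Fin m) := isHomogeneousCoordinate_eval w (a b) x₀
  refine ⟨fun b x => x (a b), hz, ?_⟩
  have hcont : ContinuousAt (fun x => Sum.elim (fun i => fderiv ℝ (q i) x)
      (Sum.elim (fun i => fderiv ℝ (p i) x) fun b => fderiv ℝ (fun y => y (a b)) x)) x₀ := by
    refine continuousAt_pi.2 ?_
    rintro (i | i | b)
    exacts [(h.position i).1.fderiv.continuousAt, (h.momentum i).1.fderiv.continuousAt,
      (hz b).1.fderiv.continuousAt]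
  refine hcont.eventually (LinearIndependent.eventually ?_)
  refine (linearIndependent_equiv' (Equiv.sumAssoc _ _ _) (funext ?_)).1 ha
  rintro ((i | i) | b) <;> rfl

end Completion

end HomogeneousDarboux

/-- Darboux theorem for homogeneous presymplectic forms (even case): a
closed, `∇`-homogeneous 2-form `ω` of constant rank `2r` on an open subset of `ℝⁿ` is
`Σᵢ dpᵢ ∧ dqⁱ` in a system of homogeneous coordinates `(qⁱ, pᵢ, zᵃ)` around any point `x₀`
with `∇(x₀) = 0`, or with `∇(x₀) ≠ 0` and `∇(x₀) ∉ ker ω_{x₀}`. -/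
theorem stmt_11 (n r : ℕ) (w : Fin n → ℝ) (wt : ℝ)
    (U : Set (Fin n → ℝ)) (hU : IsOpen U)
    (ω : (Fin n → ℝ) → (Fin n → ℝ) →L[ℝ] (Fin n → ℝ) →L[ℝ] ℝ)
    (hsm : ContDiffOn ℝ (⊤ : ℕ∞) ω U)
    (halt : ∀ x ∈ U, ∀ u v, ω x u v = - ω x v u)
    (hclosed : ∀ x ∈ U, ∀ u v z,
      fderiv ℝ ω x u v z + fderiv ℝ ω x v z u + fderiv ℝ ω x z u v = 0)
    (hrank : ∀ x ∈ U,
      Module.finrank ℝ (LinearMap.range (ω x).toLinearMap) = 2 * r)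
    (hhom : ∀ x ∈ U, ∀ u v,
      fderiv ℝ ω x (fun j => w j * x j) u v
        + ω x (fun j => w j * u j) v + ω x u (fun j => w j * v j) = wt * ω x u v)
    (x₀ : Fin n → ℝ) (hx₀ : x₀ ∈ U)
    (hcase : (fun j => w j * x₀ j) = 0 ∨
      ((fun j => w j * x₀ j) ≠ 0 ∧ ω x₀ (fun j => w j * x₀ j) ≠ 0)) :
    ∃ (V : Set (Fin n → ℝ)) (q p : Fin r → (Fin n → ℝ) → ℝ)
      (z : Fin (n - 2 * r) → (Fin n → ℝ) → ℝ),
      IsOpen V ∧ x₀ ∈ V ∧ V ⊆ U ∧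
      (∀ i, ContDiffOn ℝ (⊤ : ℕ∞) (q i) V) ∧ (∀ i, ContDiffOn ℝ (⊤ : ℕ∞) (p i) V) ∧
      (∀ a, ContDiffOn ℝ (⊤ : ℕ∞) (z a) V) ∧
      (∀ y ∈ V, LinearIndependent ℝ
        (Sum.elim (fun i => fderiv ℝ (q i) y)
          (Sum.elim (fun i => fderiv ℝ (p i) y) (fun a => fderiv ℝ (z a) y)) :
          Fin r ⊕ (Fin r ⊕ Fin (n - 2 * r)) → (Fin n → ℝ) →L[ℝ] ℝ)) ∧
      (∀ i, ∃ lam : ℝ, ∀ y ∈ V,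
        fderiv ℝ (q i) y (fun j => w j * y j) = lam * q i y) ∧
      (∀ i, ∃ lam : ℝ, ∀ y ∈ V,
        fderiv ℝ (p i) y (fun j => w j * y j) = lam * p i y) ∧
      (∀ a, ∃ lam : ℝ, ∀ y ∈ V,
        fderiv ℝ (z a) y (fun j => w j * y j) = lam * z a y) ∧
      (∀ y ∈ V, ∀ u v, ω y u v =
        ∑ i, (fderiv ℝ (p i) y u * fderiv ℝ (q i) y v
          - fderiv ℝ (p i) y v * fderiv ℝ (q i) y u)) := by
  have hUx : ∀ᶠ x in nhds x₀, x ∈ U := hU.mem_nhds hx₀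
  have hω : HomogeneousDarboux.IsPresymplectic ω (2 * r) x₀ :=
    ⟨hUx.mono fun x hx => hsm.contDiffAt (hU.mem_nhds hx), hUx.mono halt,
      hUx.mono hclosed, hUx.mono hrank⟩
  obtain ⟨p, q, hpq⟩ := hω.exists_isDarbouxSystem (w := w) (hUx.mono hhom)
    (hcase.imp_right And.right)
  obtain ⟨z, hz, hindep⟩ := hpq.exists_coordinate_completion hω (m := n - 2 * r) (by simp)
  obtain ⟨μq, hq⟩ := HomogeneousDarboux.exists_weights_of_isHomogeneousCoordinate hpq.position
  obtain ⟨μp, hp⟩ := HomogeneousDarboux.exists_weights_of_isHomogeneousCoordinate hpq.momentum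
  obtain ⟨μz, hz⟩ := HomogeneousDarboux.exists_weights_of_isHomogeneousCoordinate hz
  obtain ⟨V, hV, hVopen, hx₀V⟩ := eventually_nhds_iff.1
    (hUx.and (hq.and (hp.and (hz.and (hindep.and hpq.form_eq)))))
  choose hVU hq hp hz hindep hform using hV
  exact ⟨V, q, p, z, hVopen, hx₀V, hVU,
    fun i x hx => (hq x hx i).1.contDiffWithinAt, fun i x hx => (hp x hx i).1.contDiffWithinAt,
    fun a x hx => (hz x hx a).1.contDiffWithinAt, hindep,
    fun i => ⟨μq i, fun x hx => (hq x hx i).2⟩, fun i => ⟨μp i, fun x hx => (hp x hx i).2⟩,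
    fun a => ⟨μz a, fun x hx => (hz x hx a).2⟩,
    fun x hx u v => by simp only [hform x hx, sum_apply, HomogeneousDarboux.wedge_apply_apply]⟩
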